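/- arXiv:1204.1635 — 7 statements merged into one kernel-verified Lean document; each statement's English description precedes it below -/
import Mathlib

section
/- Let 0 < μ < M be real numbers. Let {Ω_n} (n ≥ 1) be a sequence of open subsets of ℂ such that each Ω_n is simply connected, B(0,μ) ⊆ Ω_n ⊆ B(0,M) for all n, and the sequence of complements {ℂ \ Ω_n} is uniformly locally connected. For each n let Φ_n : 𝔻 → Ω_n be a holomorphic bijection with Φ_n(0) = 0 and Φ_n'(0) > 0. Then each Φ_n extends to a continuous map on the closed unit disk, the family of these extensions is equicontinuous on the closed unit disk, and there is a subsequence {Φ_{n(k)}} converging uniformly on the closed unit disk to a continuous map Φ such that the restriction of Φ to 𝔻 is injective and holomorphic, its image Ω = Φ(𝔻) is an open simply connected set, and the complement ℂ \ Ω is locally connected. -/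
open Complex Metric Set

/-- `b` and `c` are joined inside `A` by a continuum of diameter at most `ε`. -/
def JoinedByContinuumIn (A : Set ℂ) (b c : ℂ) (ε : ℝ) : Prop :=
  ∃ B : Set ℂ, B ⊆ A ∧ IsCompact B ∧ IsConnected B ∧ b ∈ B ∧ c ∈ B ∧ Metric.diam B ≤ ε

/-- A closed set `A ⊆ ℂ` is locally connected: for every `ε > 0` there is `δ > 0` such that
any two points of `A` at distance `< δ` are joined by a continuum in `A` of diameter `≤ ε`. -/
def LocallyConnectedSet (A : Set ℂ) : Prop :=
  ∀ ε > 0, ∃ δ > 0, ∀ b ∈ A, ∀ c ∈ A, dist b c < δ → JoinedByContinuumIn A b c ε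

/-- A sequence of closed sets is uniformly locally connected: `δ` may be chosen
independently of `n`. -/
def UnifLocallyConnectedSeq (A : ℕ → Set ℂ) : Prop :=
  ∀ ε > 0, ∃ δ > 0, ∀ n : ℕ, ∀ b ∈ A n, ∀ c ∈ A n, dist b c < δ →
    JoinedByContinuumIn (A n) b c ε

/-- A family of maps is equicontinuous on a set `S`:
`δ` depends only on `ε`, not on `n` nor on the points. -/
def EquicontinuousOnSet (Ψ : ℕ → ℂ → ℂ) (S : Set ℂ) : Prop :=
  ∀ ε > 0, ∃ δ > 0, ∀ x ∈ S, ∀ y ∈ S, dist x y < δ → ∀ n, dist (Ψ n x) (Ψ n y) < ε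


/-- Two continuous logarithms of the same function on a preconnected set differ by a constant. -/
lemma log_diff_const {X : Type*} [TopologicalSpace X] {S : Set X} (hS : IsPreconnected S)
    {g₁ g₂ : X → ℂ}
    (h₁ : ContinuousOn g₁ S) (h₂ : ContinuousOn g₂ S)
    (h : ∀ x ∈ S, Complex.exp (g₁ x) = Complex.exp (g₂ x)) :
    ∀ x ∈ S, ∀ y ∈ S, g₁ x - g₂ x = g₁ y - g₂ y := by
  have key : ∀ x ∈ S, ∃ n : ℤ, g₁ x - g₂ x = n * (2 * Real.pi * I) := by
    intro x hx
    obtain ⟨n, hn⟩ := Complex.exp_eq_exp_iff_exists_int.1 (h x hx)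
    exact ⟨n, by rw [hn]; ring⟩
  have hc : (range (fun n : ℤ => (n : ℂ) * (2 * Real.pi * I))).Countable := countable_range _
  have hT : IsTotallyDisconnected (range (fun n : ℤ => (n : ℂ) * (2 * Real.pi * I))) :=
    hc.isTotallyDisconnected
  have hsub := hT ((fun x => g₁ x - g₂ x) '' S) (by
    rintro _ ⟨x, hx, rfl⟩
    obtain ⟨n, hn⟩ := key x hx
    exact ⟨n, hn.symm⟩) (hS.image _ (h₁.sub h₂))
  intro x hx y hy
  exact hsub (mem_image_of_mem _ hx) (mem_image_of_mem _ hy)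

/-- A continuous zero-free function on the plane cannot coincide with `z - w` near infinity. -/
lemma no_extension (T : ℂ → ℂ) (hT : Continuous T) (hT0 : ∀ z, T z ≠ 0) (w : ℂ) (R : ℝ)
    (h : ∀ z, R ≤ ‖z‖ → T z = z - w) : False := by
  obtain ⟨G, ⟨-, hG⟩, -⟩ := Complex.isCoveringMapOn_exp.existsUnique_continuousMap_lifts
    (⟨T, hT⟩ : C(ℂ, ℂ)) (a₀ := 0) (e₀ := Complex.log (T 0))
    (by simp [Complex.exp_log (hT0 0)]) (fun a => hT0 a)
  have hG' : ∀ z, Complex.exp (G z) = T z := fun z => congrFun hG z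
  set r : ℝ := |R| + ‖w‖ + 1 with hr
  have hr0 : 0 < r := by positivity
  have hRr : R ≤ r := by
    have := le_abs_self R
    have := norm_nonneg w
    linarith
  have hwr : ‖w‖ < r := by
    have := abs_nonneg R
    linarith
  let c : ℝ → ℂ := fun t => r * Complex.exp (t * I)
  have hcn : ∀ t, ‖c t‖ = r := by
    intro t
    simp [c, Complex.norm_exp, abs_of_pos hr0]
  have hc0 : ∀ t, c t ≠ 0 := fun t h0 => by
    have := hcn t
    rw [h0] at this
    simp at this
    linarith
  have hcc : Continuous c := by fun_prop
  have hsl : ∀ t, 1 - w / c t ∈ Complex.slitPlane := by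
    intro t
    rw [sub_eq_add_neg]
    apply Complex.mem_slitPlane_of_norm_lt_one
    rw [norm_neg, norm_div, hcn, div_lt_one hr0]
    exact hwr
  have hl : Continuous (fun t => Complex.log (1 - w / c t)) := by
    refine Continuous.clog ?_ hsl
    exact continuous_const.sub (continuous_const.div hcc hc0)
  have := log_diff_const (S := (univ : Set ℝ)) isPreconnected_univ
    (g₁ := fun t => G (c t) - Complex.log (1 - w / c t)) (g₂ := fun t => Real.log r + t * I)
    ((G.continuous.comp hcc).sub hl).continuousOn (by fun_prop) (by
      intro t _
      have h1 : (1 - w / c t) ≠ 0 := Complex.slitPlane_ne_zero (hsl t)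
      rw [Complex.exp_sub, Complex.exp_log h1, hG', h _ (by rw [hcn]; exact hRr), Complex.exp_add,
        ← Complex.ofReal_exp, Real.exp_log hr0]
      have h2 := hc0 t
      have : c t - w = c t * (1 - w / c t) := by field_simp
      rw [this, mul_div_assoc, div_self h1, mul_one]) 0 (mem_univ _) (2 * Real.pi) (mem_univ _)
  have hcp : c (2 * Real.pi) = c 0 := by
    simp [c]
  simp only [hcp] at this
  have h3 := sub_right_injective this
  simp at h3

lemma log_ball (a w : ℂ) (ε : ℝ) (hw : ε ≤ dist w a) :
    ∃ g : ℂ → ℂ, ContinuousOn g (ball a ε) ∧ ∀ z ∈ ball a ε, Complex.exp (g z) = z - w := by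
  by_cases hε : ε ≤ 0
  · refine ⟨0, ?_, ?_⟩ <;> rw [Metric.ball_eq_empty.2 hε] <;> simp
  push Not at hε
  have haw : a - w ≠ 0 := by
    intro h0
    have : w = a := by linear_combination -h0
    subst this
    simp at hw
    linarith
  have hsl : ∀ z ∈ ball a ε, 1 + (z - a) / (a - w) ∈ Complex.slitPlane := by
    intro z hz
    apply Complex.mem_slitPlane_of_norm_lt_one
    rw [norm_div, div_lt_one (norm_pos_iff.2 haw)]
    rw [mem_ball, dist_eq_norm] at hz
    rw [dist_comm, dist_eq_norm] at hw
    linarith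
  refine ⟨fun z => Complex.log (a - w) + Complex.log (1 + (z - a) / (a - w)), ?_, ?_⟩
  · refine continuousOn_const.add (ContinuousOn.clog (by fun_prop) hsl)
  · intro z hz
    rw [Complex.exp_add, Complex.exp_log haw, Complex.exp_log (Complex.slitPlane_ne_zero (hsl z hz))]
    field_simp
    ring

lemma log_compl {Ω : Set ℂ} (ho : IsOpen Ω) (hc : IsPreconnected Ω) {p w : ℂ} (hp : p ∈ Ω)
    (hw : w ∈ Ω) :
    ∃ g : ℂ → ℂ, ContinuousOn g Ωᶜ ∧ ∀ z ∈ Ωᶜ, Complex.exp (g z) = (z - w) / (z - p) := by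
  let P : ℂ → Prop := fun w => ∃ g : ℂ → ℂ, ContinuousOn g Ωᶜ ∧
    ∀ z ∈ Ωᶜ, Complex.exp (g z) = (z - w) / (z - p)
  have hne : ∀ z ∈ Ωᶜ, ∀ u ∈ Ω, z - u ≠ 0 := by
    intro z hz u hu h0
    exact hz (by rwa [sub_eq_zero.1 h0])
  have step : ∀ u ∈ Ω, ∀ r, ball u r ⊆ Ω → ∀ v ∈ ball u r, P u → P v := by
    rintro u hu r hr v hv ⟨g, hg, hge⟩
    have hsl : ∀ z ∈ Ωᶜ, 1 + (u - v) / (z - u) ∈ Complex.slitPlane := by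
      intro z hz
      apply Complex.mem_slitPlane_of_norm_lt_one
      rw [norm_div, div_lt_one (norm_pos_iff.2 (hne z hz u hu))]
      have : z ∉ ball u r := fun h => hz (hr h)
      rw [mem_ball, dist_eq_norm] at this
      rw [mem_ball, dist_comm, dist_eq_norm] at hv
      linarith
    refine ⟨fun z => g z + Complex.log (1 + (u - v) / (z - u)), hg.add (ContinuousOn.clog
      (continuousOn_const.add (ContinuousOn.div continuousOn_const (by fun_prop)
        (fun z hz => hne z hz u hu))) hsl), ?_⟩
    intro z hz
    have h1 := hne z hz u hu
    have h2 := hne z hz p hp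
    rw [Complex.exp_add, hge z hz, Complex.exp_log (Complex.slitPlane_ne_zero (hsl z hz))]
    field_simp
    ring
  by_contra hcon
  have hopen1 : IsOpen {u | u ∈ Ω ∧ P u} := by
    rw [Metric.isOpen_iff]
    rintro u ⟨hu, hPu⟩
    obtain ⟨r, hr0, hr⟩ := Metric.isOpen_iff.1 ho u hu
    exact ⟨r, hr0, fun v hv => ⟨hr hv, step u hu r hr v hv hPu⟩⟩
  have hopen2 : IsOpen {u | u ∈ Ω ∧ ¬ P u} := by
    rw [Metric.isOpen_iff]
    rintro u ⟨hu, hPu⟩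
    obtain ⟨r, hr0, hr⟩ := Metric.isOpen_iff.1 ho u hu
    refine ⟨r / 2, by linarith, fun v hv => ?_⟩
    rw [mem_ball] at hv
    refine ⟨hr (by rw [mem_ball]; linarith), fun hPv => hPu ?_⟩
    refine step v (hr (by rw [mem_ball]; linarith)) (r / 2) ?_ u (by rwa [mem_ball, dist_comm]) hPv
    intro y hy
    apply hr
    rw [mem_ball] at hy ⊢
    linarith [dist_triangle y v u]
  obtain ⟨x, hx, ⟨_, h1⟩, ⟨_, h2⟩⟩ := hc _ _ hopen1 hopen2 (fun u hu => by
    by_cases h : P u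
    · exact Or.inl ⟨hu, h⟩
    · exact Or.inr ⟨hu, h⟩) ⟨p, hp, hp, 0, continuousOn_const, fun z hz => by
      simp [div_self (hne z hz p hp)]⟩ ⟨w, hw, hw, hcon⟩
  exact h2 h1

lemma separation {Ω U V G B : Set ℂ} {a w : ℂ} {ε R : ℝ} (ho : IsOpen Ω) (hc : IsPreconnected Ω)
    (hΩR : Ω ⊆ ball 0 R)
    (hU : IsOpen U) (hV : IsOpen V) (hUV : Disjoint U V) (hG : IsCompact G)
    (hcover : Ω ⊆ U ∪ V ∪ G) (hUΩ : U ⊆ Ω \ G) (hVΩ : V ⊆ Ω \ G)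
    (h0 : (0:ℂ) ∈ V) (hw : w ∈ U) (hBc : IsPreconnected B) (hBne : B.Nonempty)
    (hBΩ : B ⊆ Ωᶜ) (hGB : G ∩ Ωᶜ ⊆ B) (hGball : G ⊆ ball a ε) (hBball : B ⊆ ball a ε)
    (h0a : ε ≤ dist 0 a) : dist w a < ε := by
  by_contra hwa
  push Not at hwa
  have hwΩ : w ∈ Ω := (hUΩ hw).1
  have h0Ω : (0:ℂ) ∈ Ω := (hVΩ h0).1
  obtain ⟨gw, hgw, hgwe⟩ := log_ball a w ε hwa
  obtain ⟨gz, hgz, hgze⟩ := log_ball a 0 ε h0a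
  obtain ⟨g2, hg2, hg2e⟩ := log_compl ho hc h0Ω hwΩ
  have hg1 : ContinuousOn (fun z => gw z - gz z) (ball a ε) := hgw.sub hgz
  have hg1e : ∀ z ∈ ball a ε, Complex.exp (gw z - gz z) = (z - w) / (z - 0) := by
    intro z hz
    rw [Complex.exp_sub, hgwe z hz, hgze z hz]
  obtain ⟨b, hb⟩ := hBne
  have hdiff := log_diff_const hBc (hg1.mono hBball) (hg2.mono hBΩ) (fun x hx => by
    rw [hg1e x (hBball hx), hg2e x (hBΩ hx)])
  set κ := gw b - gz b - g2 b with hκ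
  have hκ1 : Complex.exp κ = 1 := by
    rw [hκ, Complex.exp_sub, hg1e b (hBball hb), hg2e b (hBΩ hb)]
    refine div_self (div_ne_zero ?_ ?_)
    · intro h
      exact hBΩ hb (by rwa [sub_eq_zero.1 h])
    · intro h
      exact hBΩ hb (by rwa [sub_eq_zero.1 h])
  classical
  let g : ℂ → ℂ := fun z => if z ∈ Ωᶜ then g2 z else gw z - gz z - κ
  have hgA : EqOn g g2 Ωᶜ := fun z hz => if_pos hz
  have hgG : EqOn g (fun z => gw z - gz z - κ) G := by
    intro z hz
    by_cases hzΩ : z ∈ Ωᶜ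
    · have hzB := hGB ⟨hz, hzΩ⟩
      have := hdiff z hzB b hb
      rw [hgA hzΩ]
      simp only
      rw [hκ, ← this]
      ring
    · exact if_neg hzΩ
  have hgc : ContinuousOn g (G ∪ Ωᶜ) :=
    ContinuousOn.union_of_isClosed
      (((hg1.mono hGball).sub continuousOn_const).congr hgG) (hg2.congr hgA)
      hG.isClosed ho.isClosed_compl
  have hge : ∀ z ∈ G ∪ Ωᶜ, Complex.exp (g z) = (z - w) / (z - 0) := by
    rintro z (hz | hz)
    · rw [hgG hz]
      simp only
      rw [Complex.exp_sub, hκ1, hg1e z (hGball hz), div_one]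
    · rw [hgA hz, hg2e z hz]
  have hKcl : IsClosed (G ∪ Ωᶜ) := hG.isClosed.union ho.isClosed_compl
  obtain ⟨gt, hgt⟩ := ContinuousMap.exists_restrict_eq hKcl
    (⟨(G ∪ Ωᶜ).domRestrict g, hgc.domRestrict⟩ : C(↥(G ∪ Ωᶜ), ℂ))
  have hgt' : ∀ z ∈ G ∪ Ωᶜ, gt z = g z := fun z hz => by
    exact congrArg (fun f => f ⟨z, hz⟩) hgt
  have hK0 : ∀ z ∈ G ∪ Ωᶜ, z ≠ 0 := by
    rintro z (hz | hz) rfl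
    · exact (hVΩ h0).2 hz
    · exact hz h0Ω
  have hcl : IsClosed (U ∪ (G ∪ Ωᶜ)) := by
    have : U ∪ (G ∪ Ωᶜ) = Vᶜ := by
      ext z
      constructor
      · rintro (h | h | h) hv
        · exact hUV.le_bot ⟨h, hv⟩
        · exact (hVΩ hv).2 h
        · exact h (hVΩ hv).1
      · intro hv
        by_cases hz : z ∈ Ω
        · rcases hcover hz with (h | h) | h
          · exact Or.inl h
          · exact absurd h hv
          · exact Or.inr (Or.inl h)
        · exact Or.inr (Or.inr hz)
    rw [this]
    exact hV.isClosed_compl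
  let T : ℂ → ℂ := fun z => if z ∈ U then Complex.exp (gt z) * z else z - w
  have hT1 : EqOn T (fun z => Complex.exp (gt z) * z) (U ∪ (G ∪ Ωᶜ)) := by
    intro z hz
    by_cases hzU : z ∈ U
    · exact if_pos hzU
    · have hz' := hz.resolve_left hzU
      have := hK0 z hz'
      simp only [T, if_neg hzU]
      rw [hgt' z hz', hge z hz', sub_zero, div_mul_cancel₀ _ this]
  have hT2 : EqOn T (fun z => z - w) Uᶜ := fun z hz => if_neg hz
  have hTc : Continuous T := by
    rw [← continuousOn_univ]
    have : (univ : Set ℂ) = (U ∪ (G ∪ Ωᶜ)) ∪ Uᶜ := by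
      ext z
      by_cases hz : z ∈ U <;> simp [hz]
    rw [this]
    refine ContinuousOn.union_of_isClosed (ContinuousOn.congr ?_ hT1) (ContinuousOn.congr ?_ hT2)
      hcl hU.isClosed_compl
    · fun_prop
    · fun_prop
  refine no_extension T hTc ?_ w R ?_
  · intro z
    by_cases hz : z ∈ U
    · rw [hT1 (Or.inl hz)]
      refine mul_ne_zero (Complex.exp_ne_zero _) ?_
      rintro rfl
      exact hUV.le_bot ⟨hz, h0⟩
    · rw [hT2 hz]
      intro h
      apply hz
      rwa [sub_eq_zero.1 h]
  · intro z hz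
    apply hT2
    intro hzU
    have := hΩR (hUΩ hzU).1
    rw [mem_ball, dist_zero_right] at this
    linarith

open MeasureTheory in
lemma area_le {h : ℂ → ℂ} {S : Set ℂ} (hS : MeasurableSet S) {W : Set ℂ} (hW : IsOpen W)
    (hSW : S ⊆ W) (hd : DifferentiableOn ℂ h W) (hi : InjOn h W) :
    ∫⁻ z in S, ENNReal.ofReal (‖deriv h z‖ ^ 2) = volume (h '' S) := by
  have key := lintegral_abs_det_fderiv_eq_addHaar_image (μ := (volume : Measure ℂ)) hS
    (f := h) (f' := fun z => (ContinuousLinearMap.restrictScalars ℝ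
      (ContinuousLinearMap.toSpanSingleton ℂ (deriv h z)))) (by
      intro z hz
      have := (hd.differentiableAt (hW.mem_nhds (hSW hz))).hasDerivAt
      exact (this.hasFDerivAt.restrictScalars ℝ).hasFDerivWithinAt) (hi.mono hSW)
  rw [← key]
  congr 1
  ext z
  congr 1
  have h1 : ((ContinuousLinearMap.restrictScalars ℝ
      (ContinuousLinearMap.toSpanSingleton ℂ (deriv h z)))).det = Algebra.norm ℝ (deriv h z) := by
    rw [Algebra.norm_apply, ContinuousLinearMap.det]
    congr 1
    ext <;> simp [mul_comm]
  rw [h1, Algebra.norm_complex_apply, Complex.normSq_eq_norm_sq, abs_of_nonneg (by positivity)]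

open MeasureTheory in
lemma exists_good_line {h : ℂ → ℂ} {M T : ℝ} (hT : 0 < T)
    (hd : DifferentiableOn ℂ h {z : ℂ | |z.im| < Real.pi / 2})
    (hi : InjOn h {z : ℂ | |z.im| < Real.pi / 2})
    (hM : ∀ z : ℂ, |z.im| < Real.pi / 2 → h z ∈ ball (0:ℂ) M) :
    ∃ s ∈ Icc (-(2 * T)) (-T), ∫⁻ θ in Ioo (-(Real.pi / 2)) (Real.pi / 2),
      ENNReal.ofReal (‖deriv h (⟨s, θ⟩ : ℂ)‖ ^ 2) ≤ volume (ball (0:ℂ) M) / ENNReal.ofReal T := by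
  set s1 := Icc (-(2 * T)) (-T)
  set t1 := Ioo (-(Real.pi / 2)) (Real.pi / 2)
  have hvol : volume s1 = ENNReal.ofReal T := by
    rw [Real.volume_Icc]; congr 1; ring
  have hW : IsOpen {z : ℂ | |z.im| < Real.pi / 2} :=
    isOpen_lt (by fun_prop) (by fun_prop)
  have hms : MeasurableSet (s1 ×ˢ t1) := measurableSet_Icc.prod measurableSet_Ioo
  have hmS : MeasurableSet (s1 ×ℂ t1) := by
    have : s1 ×ℂ t1 = Complex.measurableEquivRealProd ⁻¹' (s1 ×ˢ t1) := by
      ext z; simp [Complex.mem_reProdIm]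
    rw [this]
    exact Complex.measurableEquivRealProd.measurable hms
  have harea := area_le hmS hW (fun z hz => by
    rw [Complex.mem_reProdIm] at hz
    exact abs_lt.2 hz.2) hd hi
  have hle : volume (h '' (s1 ×ℂ t1)) ≤ volume (ball (0:ℂ) M) := by
    apply measure_mono
    rintro _ ⟨z, hz, rfl⟩
    rw [Complex.mem_reProdIm] at hz
    exact hM z (abs_lt.2 hz.2)
  rw [← harea] at hle
  have hmeas : Measurable (fun z => ENNReal.ofReal (‖deriv h z‖ ^ 2)) :=
    ((measurable_deriv h).norm.pow_const 2).ennreal_ofReal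
  have hfub : ∫⁻ z in s1 ×ℂ t1, ENNReal.ofReal (‖deriv h z‖ ^ 2) =
      ∫⁻ s in s1, ∫⁻ θ in t1, ENNReal.ofReal (‖deriv h (⟨s, θ⟩ : ℂ)‖ ^ 2) := by
    rw [← Complex.volume_preserving_equiv_real_prod.symm.setLIntegral_comp_preimage_emb
      (MeasurableEquiv.measurableEmbedding _)]
    have : (Complex.measurableEquivRealProd.symm ⁻¹' (s1 ×ℂ t1)) = s1 ×ˢ t1 := by
      ext p; simp [Complex.mem_reProdIm]
    rw [this, Measure.volume_eq_prod, setLIntegral_prod]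
    · rfl
    · exact (hmeas.comp Complex.measurableEquivRealProd.symm.measurable).aemeasurable
  have hmeas2 : Measurable (fun s : ℝ => ∫⁻ θ in t1, ENNReal.ofReal (‖deriv h (⟨s, θ⟩ : ℂ)‖ ^ 2)) :=
    Measurable.lintegral_prod_right'
      (f := fun p : ℝ × ℝ => ENNReal.ofReal (‖deriv h (⟨p.1, p.2⟩ : ℂ)‖ ^ 2))
      (hmeas.comp Complex.measurableEquivRealProd.symm.measurable)
  obtain ⟨s, hs, hs'⟩ := exists_le_setLAverage (μ := volume) (s := s1) (by rw [hvol]; simpa using hT)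
    (by rw [hvol]; simp) hmeas2.aemeasurable
  refine ⟨s, hs, hs'.trans ?_⟩
  rw [setLAverage_eq, hvol, ← hfub]
  gcongr

open MeasureTheory in
/-- Length estimate on a good line. -/
lemma good_line_curve {h : ℂ → ℂ} {s η : ℝ} (hη : 0 < η)
    (hd : DifferentiableOn ℂ h {z : ℂ | |z.im| < Real.pi / 2})
    (hA : ∫⁻ θ in Ioo (-(Real.pi / 2)) (Real.pi / 2),
      ENNReal.ofReal (‖deriv h (⟨s, θ⟩ : ℂ)‖ ^ 2) ≤ ENNReal.ofReal (η ^ 2)) :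
    ∃ γ : ℝ → ℂ, ContinuousOn γ (Icc (-(Real.pi / 2)) (Real.pi / 2)) ∧
      (∀ θ ∈ Ioo (-(Real.pi / 2)) (Real.pi / 2), γ θ = h ⟨s, θ⟩) ∧
      ∀ θ ∈ Icc (-(Real.pi / 2)) (Real.pi / 2), dist (γ θ) (γ 0) ≤ 3 * η := by
  have hpi := Real.pi_pos
  set p := Real.pi / 2 with hp
  have hp0 : 0 < p := by positivity
  rw [setLIntegral_congr Ioo_ae_eq_Ioc] at hA
  set u : ℝ → ℂ := fun θ => deriv h (⟨s, θ⟩ : ℂ) * I with hu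
  have hmk : Measurable (fun θ : ℝ => (⟨s, θ⟩ : ℂ)) := by
    have : (fun θ : ℝ => (⟨s, θ⟩ : ℂ)) = fun θ : ℝ => (s : ℂ) + θ * I := by
      ext θ; apply Complex.ext <;> simp
    rw [this]
    fun_prop
  have hum : Measurable u := ((measurable_deriv h).comp hmk).mul_const _
  have hun : ∀ θ, ‖u θ‖ = ‖deriv h (⟨s, θ⟩ : ℂ)‖ := by
    intro θ; simp [hu]
  simp_rw [← hun] at hA
  have hsq : IntegrableOn (fun θ => ‖u θ‖ ^ 2) (Ioc (-p) p) := by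
    refine ⟨(hum.norm.pow_const 2).aestronglyMeasurable, ?_⟩
    rw [hasFiniteIntegral_iff_ofReal (Filter.Eventually.of_forall fun θ => by positivity)]
    exact hA.trans_lt ENNReal.ofReal_lt_top
  have hsqle : ∫ θ in Ioc (-p) p, ‖u θ‖ ^ 2 ≤ η ^ 2 := by
    rw [← ofReal_integral_eq_lintegral_ofReal hsq
      (Filter.Eventually.of_forall fun θ => by positivity)] at hA
    exact (ENNReal.ofReal_le_ofReal_iff (by positivity)).1 hA
  have hpt : ∀ θ, ‖u θ‖ ≤ η / 2 + ‖u θ‖ ^ 2 * (1 / (2 * η)) := by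
    intro θ
    have : η / 2 + ‖u θ‖ ^ 2 * (1 / (2 * η)) - ‖u θ‖ = (‖u θ‖ - η) ^ 2 / (2 * η) := by
      field_simp
      ring
    have h2 : 0 ≤ (‖u θ‖ - η) ^ 2 / (2 * η) := by positivity
    linarith
  have hconst : IntegrableOn (fun _ : ℝ => η / 2) (Ioc (-p) p) := by
    exact integrableOn_const (by simp)
  have hmaj : IntegrableOn (fun θ => η / 2 + ‖u θ‖ ^ 2 * (1 / (2 * η))) (Ioc (-p) p) :=
    hconst.add (hsq.mul_const _)
  have huInt : IntegrableOn u (Ioc (-p) p) :=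
    hmaj.mono' hum.aestronglyMeasurable (Filter.Eventually.of_forall hpt)
  have hbd : ∫ θ in Ioc (-p) p, ‖u θ‖ ≤ 3 * η := by
    have h1 : ∫ θ in Ioc (-p) p, ‖u θ‖ ≤
        ∫ θ in Ioc (-p) p, (η / 2 + ‖u θ‖ ^ 2 * (1 / (2 * η))) :=
      integral_mono huInt.norm hmaj hpt
    rw [integral_add hconst (hsq.mul_const _), integral_mul_const] at h1
    have h2 : ∫ θ in Ioc (-p) p, η / 2 = Real.pi * (η / 2) := by
      simp [hp, hpi.le]
    have h3 : (∫ θ in Ioc (-p) p, ‖u θ‖ ^ 2) * (1 / (2 * η)) ≤ η ^ 2 * (1 / (2 * η)) := by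
      gcongr
    have h4 : η ^ 2 * (1 / (2 * η)) = η / 2 := by field_simp
    have h5 := Real.pi_le_four
    rw [h2] at h1
    nlinarith
  have hii : IntervalIntegrable u volume (-p) p :=
    (intervalIntegrable_iff_integrableOn_Ioc_of_le (by linarith)).2 huInt
  have h0mem : (0:ℝ) ∈ Icc (-p) p := ⟨by linarith, hp0.le⟩
  refine ⟨fun θ => h ⟨s, 0⟩ + ∫ t in (0:ℝ)..θ, u t, ?_, ?_, ?_⟩
  · have := intervalIntegral.continuousOn_primitive_interval' hii (a := 0)
      (by rw [uIcc_of_le (by linarith)]; exact h0mem)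
    rw [uIcc_of_le (by linarith)] at this
    exact continuousOn_const.add this
  · intro θ hθ
    have hsub : uIcc 0 θ ⊆ Ioo (-p) p :=
      (convex_Ioo (-p) p).ordConnected.uIcc_subset ⟨by linarith, hp0⟩ hθ
    have := intervalIntegral.integral_eq_sub_of_hasDerivAt (a := 0) (b := θ)
      (f := fun t : ℝ => h ⟨s, t⟩) (f' := u) (by
        intro t ht
        have ht' := hsub ht
        have hW : IsOpen {z : ℂ | |z.im| < p} := isOpen_lt (by fun_prop) (by fun_prop)
        have hz : (⟨s, t⟩ : ℂ) ∈ {z : ℂ | |z.im| < p} := abs_lt.2 ht'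
        have h1 := (hd.differentiableAt (hW.mem_nhds hz)).hasDerivAt
        have h2 : HasDerivAt (fun t : ℝ => (⟨s, t⟩ : ℂ)) I t := by
          have : (fun θ : ℝ => (⟨s, θ⟩ : ℂ)) = fun θ : ℝ => (s : ℂ) + θ * I := by
            ext θ; apply Complex.ext <;> simp
          rw [this]
          simpa using ((Complex.ofRealCLM.hasDerivAt (x := t)).mul_const I).const_add (s : ℂ)
        have h3 := HasDerivAt.scomp t h1 h2
        simpa [hu, mul_comm, Function.comp_def] using h3)
      (hii.mono_set (by
        rw [uIcc_of_le (show -p ≤ p by linarith)]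
        exact hsub.trans Ioo_subset_Icc_self))
    simp only [this]
    ring
  · intro θ hθ
    simp only [intervalIntegral.integral_same, add_zero, dist_eq_norm, add_sub_cancel_left]
    refine intervalIntegral.norm_integral_le_integral_norm_uIoc.trans (le_trans ?_ hbd)
    refine setIntegral_mono_set huInt.norm (Filter.Eventually.of_forall fun _ => norm_nonneg _)
      (LE.le.eventuallyLE ?_)
    intro t ht
    rw [mem_uIoc] at ht
    rcases ht with ⟨h1, h2⟩ | ⟨h1, h2⟩
    · exact ⟨by linarith, h2.trans hθ.2⟩
    · exact ⟨lt_of_le_of_lt hθ.1 h1, by linarith⟩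

lemma image_open_of_inj {f : ℂ → ℂ} {W : Set ℂ} (hW : IsOpen W) (hc : IsPreconnected W)
    (hne : W.Nontrivial) (hd : DifferentiableOn ℂ f W) (hi : InjOn f W) :
    ∀ s ⊆ W, IsOpen s → IsOpen (f '' s) := by
  rcases (hd.analyticOnNhd hW).is_constant_or_isOpen hc with ⟨c, h⟩ | h
  · obtain ⟨x, hx, y, hy, hxy⟩ := hne
    exact absurd (hi hx hy (by rw [h x hx, h y hy])) hxy
  · exact h

lemma unitBall_nontrivial : (ball (0:ℂ) 1).Nontrivial :=
  ⟨0, by simp, 1 / 2, by simp; norm_num, by norm_num⟩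

lemma image_open_ball {f : ℂ → ℂ} (hd : DifferentiableOn ℂ f (ball (0:ℂ) 1))
    (hi : InjOn f (ball (0:ℂ) 1)) : ∀ s ⊆ ball (0:ℂ) 1, IsOpen s → IsOpen (f '' s) :=
  image_open_of_inj isOpen_ball (convex_ball _ _).isPreconnected unitBall_nontrivial hd hi

/-- Boundary limits lie outside the image. -/
lemma bdry_not_mem {f : ℂ → ℂ} (hd : DifferentiableOn ℂ f (ball (0:ℂ) 1))
    (hi : InjOn f (ball (0:ℂ) 1)) {X : Type*} {l : Filter X} [l.NeBot] {u : X → ℂ} {x b : ℂ}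
    (hu : Filter.Tendsto u l (nhds x)) (hub : ∀ᶠ t in l, u t ∈ ball (0:ℂ) 1)
    (hx : ‖x‖ = 1) (hfb : Filter.Tendsto (fun t => f (u t)) l (nhds b)) :
    b ∉ f '' ball (0:ℂ) 1 := by
  rintro ⟨y, hy, rfl⟩
  rw [mem_ball, dist_zero_right] at hy
  set r := (1 - ‖y‖) / 2 with hr
  have hr0 : 0 < r := by linarith
  have hsub : ball y r ⊆ ball (0:ℂ) 1 := by
    intro z hz
    rw [mem_ball] at hz ⊢
    have := dist_triangle z y 0
    rw [dist_zero_right y] at this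
    linarith
  have ho := image_open_ball hd hi _ hsub isOpen_ball
  have h1 : ∀ᶠ t in l, f (u t) ∈ f '' ball y r :=
    hfb (ho.mem_nhds (mem_image_of_mem _ (mem_ball_self hr0)))
  have h2 : ∀ᶠ t in l, u t ∈ closedBall y r := by
    filter_upwards [h1, hub] with t ht htb
    obtain ⟨z, hz, hzt⟩ := ht
    rw [← hi (hsub hz) htb hzt]
    exact ball_subset_closedBall hz
  have h3 : x ∈ closedBall y r := isClosed_closedBall.mem_of_tendsto hu h2
  rw [mem_closedBall] at h3
  have := dist_triangle x y 0
  rw [dist_zero_right, dist_zero_right] at this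
  linarith

/-- The conformal map from the strip `|Im z| < π/2` to the unit disk sending `-∞` to `z₀`. -/
noncomputable def stripMap (z₀ z : ℂ) : ℂ := z₀ * ((1 - Complex.exp z) / (1 + Complex.exp z))

lemma norm_cayley_aux (ζ : ℂ) : ‖1 + ζ‖ ^ 2 - ‖1 - ζ‖ ^ 2 = 4 * ζ.re := by
  rw [Complex.sq_norm, Complex.sq_norm, Complex.normSq_apply, Complex.normSq_apply]
  simp
  ring

lemma one_add_ne_zero_of_re {ζ : ℂ} (h : 0 ≤ ζ.re) : 1 + ζ ≠ 0 := by
  intro h0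
  have := congrArg Complex.re h0
  simp at this
  linarith

lemma exp_re_pos {z : ℂ} (hz : |z.im| < Real.pi / 2) : 0 < (Complex.exp z).re := by
  rw [Complex.exp_re]
  have := abs_lt.1 hz
  exact mul_pos (Real.exp_pos _) (Real.cos_pos_of_mem_Ioo ⟨this.1, this.2⟩)

lemma exp_re_nonneg {z : ℂ} (hz : |z.im| ≤ Real.pi / 2) : 0 ≤ (Complex.exp z).re := by
  rw [Complex.exp_re]
  have := abs_le.1 hz
  exact mul_nonneg (Real.exp_pos _).le (Real.cos_nonneg_of_mem_Icc ⟨this.1, this.2⟩)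

lemma stripMap_mem {z₀ z : ℂ} (h0 : ‖z₀‖ = 1) (hz : |z.im| < Real.pi / 2) :
    stripMap z₀ z ∈ ball (0:ℂ) 1 := by
  have h1 := exp_re_pos hz
  have h2 := norm_cayley_aux (Complex.exp z)
  have h3 := norm_pos_iff.2 (one_add_ne_zero_of_re h1.le)
  rw [mem_ball, dist_zero_right, stripMap, norm_mul, h0, one_mul, norm_div, div_lt_one h3]
  exact lt_of_pow_lt_pow_left₀ 2 h3.le (by linarith)

lemma stripMap_bdry {z₀ z : ℂ} (h0 : ‖z₀‖ = 1) (hz : |z.im| = Real.pi / 2) :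
    ‖stripMap z₀ z‖ = 1 := by
  have h1 : (Complex.exp z).re = 0 := by
    rw [Complex.exp_re, ← Real.cos_abs, hz, Real.cos_pi_div_two, mul_zero]
  have h2 := norm_cayley_aux (Complex.exp z)
  have h3 := norm_pos_iff.2 (one_add_ne_zero_of_re h1.ge)
  rw [stripMap, norm_mul, h0, one_mul, norm_div, div_eq_one_iff_eq h3.ne']
  rw [h1] at h2
  have := norm_nonneg (1 - Complex.exp z)
  nlinarith

lemma stripMap_continuousAt {z₀ z : ℂ} (hz : |z.im| ≤ Real.pi / 2) :
    DifferentiableAt ℂ (stripMap z₀) z := by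
  unfold stripMap
  refine DifferentiableAt.const_mul (DifferentiableAt.div (by fun_prop) (by fun_prop) ?_) _
  exact one_add_ne_zero_of_re (exp_re_nonneg hz)

lemma stripMap_injOn {z₀ : ℂ} (h0 : ‖z₀‖ = 1) :
    InjOn (stripMap z₀) {z : ℂ | |z.im| < Real.pi / 2} := by
  intro z hz w hw h
  have hz0 : z₀ ≠ 0 := by
    intro h; simp [h] at h0
  have h1 := one_add_ne_zero_of_re (exp_re_pos hz).le
  have h2 := one_add_ne_zero_of_re (exp_re_pos hw).le
  have h3 := mul_left_cancel₀ hz0 h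
  rw [div_eq_div_iff h1 h2] at h3
  have h4 : Complex.exp z = Complex.exp w := by linear_combination -h3 / 2
  have h5 := abs_lt.1 (show |z.im| < Real.pi / 2 from hz)
  have h6 := abs_lt.1 (show |w.im| < Real.pi / 2 from hw)
  have := Real.pi_pos
  exact Complex.exp_inj_of_neg_pi_lt_of_le_pi (by linarith) (by linarith) (by linarith)
    (by linarith) h4

lemma stripMap_surj {z₀ x : ℂ} (h0 : ‖z₀‖ = 1) (hx : x ∈ ball (0:ℂ) 1) :
    ∃ z : ℂ, |z.im| < Real.pi / 2 ∧ stripMap z₀ z = x ∧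
      z.re = Real.log (‖z₀ - x‖ / ‖z₀ + x‖) := by
  have hz0 : z₀ ≠ 0 := by
    intro h; simp [h] at h0
  rw [mem_ball, dist_zero_right] at hx
  have hne1 : z₀ + x ≠ 0 := by
    intro h
    have : z₀ = -x := by linear_combination h
    rw [this, norm_neg] at h0
    linarith
  have hne2 : z₀ - x ≠ 0 := by
    intro h
    have : z₀ = x := by linear_combination h
    rw [this] at h0
    linarith
  set ζ := (z₀ - x) / (z₀ + x) with hζ
  have hζ0 : ζ ≠ 0 := div_ne_zero hne2 hne1
  have hpos : 0 < ζ.re := by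
    have h1 := norm_cayley_aux ζ
    have e1 : 1 + ζ = 2 * z₀ / (z₀ + x) := by rw [hζ]; field_simp; ring
    have e2 : 1 - ζ = 2 * x / (z₀ + x) := by rw [hζ]; field_simp; ring
    have h3 := norm_pos_iff.2 hne1
    have : ‖1 - ζ‖ < ‖1 + ζ‖ := by
      rw [e1, e2]
      simp only [norm_div, norm_mul, h0]
      gcongr
      simp
    have := norm_nonneg (1 - ζ)
    nlinarith
  refine ⟨Complex.log ζ, ?_, ?_, ?_⟩
  · rw [Complex.log_im, Complex.abs_arg_lt_pi_div_two_iff]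
    exact Or.inl hpos
  · rw [stripMap, Complex.exp_log hζ0]
    have e1 : 1 + ζ = 2 * z₀ / (z₀ + x) := by rw [hζ]; field_simp; ring
    have e2 : 1 - ζ = 2 * x / (z₀ + x) := by rw [hζ]; field_simp; ring
    rw [e1, e2]
    field_simp
  · rw [Complex.log_re, hζ, norm_div]

open MeasureTheory in
lemma local_osc (μ M ε δ₀ : ℝ) (hε : 0 < ε) (hεμ : ε ≤ μ) (hδ₀ : 0 < δ₀) :
    ∃ ρ > 0, ∀ (Ω : Set ℂ) (f : ℂ → ℂ), IsOpen Ω → ball (0:ℂ) μ ⊆ Ω → Ω ⊆ ball (0:ℂ) M →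
      (∀ b ∈ Ωᶜ, ∀ c ∈ Ωᶜ, dist b c < δ₀ → JoinedByContinuumIn Ωᶜ b c (ε / 4)) →
      DifferentiableOn ℂ f (ball (0:ℂ) 1) → BijOn f (ball (0:ℂ) 1) Ω → f 0 = 0 →
      ∀ z₀ : ℂ, ‖z₀‖ = 1 → ∃ a, ∀ x ∈ ball (0:ℂ) 1, dist x z₀ < ρ → dist (f x) a < ε := by
  set η := min (ε / 12) (δ₀ / 12) with hη
  have hη0 : 0 < η := lt_min (by positivity) (by positivity)
  have hη1 : η ≤ ε / 12 := min_le_left _ _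
  have hη2 : η ≤ δ₀ / 12 := min_le_right _ _
  set v := volume (ball (0:ℂ) M) with hv
  have hvtop : v ≠ ⊤ := measure_ball_lt_top.ne
  set T := v.toReal / η ^ 2 + 1 with hT
  have hT0 : 0 < T := by positivity
  have hvT : v / ENNReal.ofReal T ≤ ENNReal.ofReal (η ^ 2) := by
    rw [← ENNReal.ofReal_toReal hvtop, ← ENNReal.ofReal_div_of_pos hT0]
    apply ENNReal.ofReal_le_ofReal
    rw [div_le_iff₀ hT0, hT, mul_add, mul_div_cancel₀ _ (by positivity)]
    linarith [sq_nonneg η]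
  refine ⟨Real.exp (-(2 * T)), Real.exp_pos _, ?_⟩
  intro Ω f ho hμΩ hΩM hulc hd hbij hf0 z₀ hz₀
  have hpi := Real.pi_pos
  set p := Real.pi / 2 with hp
  have hp0 : 0 < p := by positivity
  set S : Set ℂ := {z : ℂ | |z.im| < p} with hS
  set h : ℂ → ℂ := fun z => f (stripMap z₀ z) with hh
  have hSo : IsOpen S := isOpen_lt (by fun_prop) (by fun_prop)
  have hmaps : MapsTo (stripMap z₀) S (ball (0:ℂ) 1) := fun z hz => stripMap_mem hz₀ hz
  have hhd : DifferentiableOn ℂ h S := hd.comp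
    (fun z hz => (stripMap_continuousAt (le_of_lt hz)).differentiableWithinAt) hmaps
  have hhi : InjOn h S := hbij.injOn.comp (stripMap_injOn hz₀) hmaps
  have hhΩ : ∀ z ∈ S, h z ∈ Ω := fun z hz => hbij.mapsTo (hmaps hz)
  have hSc : IsPreconnected S := by
    have : S = Complex.imLm ⁻¹' (Ioo (-p) p) := by
      ext z; simp [hS, abs_lt]
    rw [this]
    exact ((convex_Ioo _ _).linear_preimage _).isPreconnected
  have hSn : S.Nontrivial := ⟨0, by simpa [hS] using hp0, 1, by simpa [hS] using hp0, by norm_num⟩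
  have hopen := image_open_of_inj hSo hSc hSn hhd hhi
  obtain ⟨s, hs, hsA⟩ := exists_good_line hT0 hhd hhi (fun z hz => hΩM (hhΩ z hz))
  obtain ⟨γ, hγc, hγh, hγd⟩ := good_line_curve hη0 hhd (hsA.trans hvT)
  have hΩeq : f '' ball (0:ℂ) 1 = Ω := hbij.image_eq
  -- endpoints
  have hend : ∀ θ₀ : ℝ, |θ₀| = p → γ θ₀ ∈ Ωᶜ := by
    intro θ₀ hθ₀
    have hcl : θ₀ ∈ closure (Ioo (-p) p) := by
      rw [closure_Ioo (by linarith)]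
      exact abs_le.1 hθ₀.le
    have : (nhdsWithin θ₀ (Ioo (-p) p)).NeBot := mem_closure_iff_nhdsWithin_neBot.1 hcl
    have hmk : Continuous (fun θ : ℝ => (⟨s, θ⟩ : ℂ)) := by
      have : (fun θ : ℝ => (⟨s, θ⟩ : ℂ)) = fun θ : ℝ => (s : ℂ) + θ * I := by
        ext θ; apply Complex.ext <;> simp
      rw [this]
      fun_prop
    rw [← hΩeq]
    refine bdry_not_mem hd hbij.injOn (l := nhdsWithin θ₀ (Ioo (-p) p))
      (u := fun θ => stripMap z₀ ⟨s, θ⟩) (x := stripMap z₀ ⟨s, θ₀⟩) ?_ ?_ ?_ ?_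
    · have h1 : ContinuousAt (stripMap z₀) ⟨s, θ₀⟩ :=
        (stripMap_continuousAt (by exact hθ₀.le)).continuousAt
      have h2 : ContinuousAt (fun θ : ℝ => stripMap z₀ ⟨s, θ⟩) θ₀ :=
        ContinuousAt.comp (f := fun θ : ℝ => (⟨s, θ⟩ : ℂ)) h1 hmk.continuousAt
      exact h2.tendsto.mono_left nhdsWithin_le_nhds
    · filter_upwards [self_mem_nhdsWithin] with θ hθ
      exact hmaps (abs_lt.2 hθ)
    · exact stripMap_bdry hz₀ hθ₀
    · have h1 : Filter.Tendsto γ (nhdsWithin θ₀ (Ioo (-p) p)) (nhds (γ θ₀)) :=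
        ((hγc θ₀ (abs_le.1 hθ₀.le)).mono Ioo_subset_Icc_self)
      refine h1.congr' ?_
      filter_upwards [self_mem_nhdsWithin] with θ hθ
      exact hγh θ hθ
  have habs1 : |p| = p := abs_of_pos hp0
  have habs2 : |-p| = p := by rw [abs_neg, habs1]
  have hpm : p ∈ Icc (-p) p := ⟨by linarith, le_rfl⟩
  have hpm' : -p ∈ Icc (-p) p := ⟨le_rfl, by linarith⟩
  have hsplit : ∀ θ ∈ Icc (-p) p, θ ∉ Ioo (-p) p → θ = p ∨ θ = -p := by
    intro θ hθ hθ'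
    by_contra hcon
    push Not at hcon
    exact hθ' ⟨lt_of_le_of_ne hθ.1 (Ne.symm hcon.2), lt_of_le_of_ne hθ.2 hcon.1⟩
  have hγdd : ∀ θ ∈ Icc (-p) p, dist (γ θ) (γ p) ≤ 6 * η := by
    intro θ hθ
    have := dist_triangle_right (γ θ) (γ p) (γ 0)
    linarith [hγd θ hθ, hγd p hpm]
  obtain ⟨B, hBsub, hBcomp, hBconn, hBp, hBm, hBd⟩ := hulc _ (hend p habs1) _ (hend (-p) habs2) (by
    rw [dist_comm]
    linarith [hγdd (-p) hpm'])
  refine ⟨γ p, ?_⟩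
  intro x hx hxz
  obtain ⟨z, hzS, hzx, hzre⟩ := stripMap_surj hz₀ hx
  have hs0 : s < 0 := by linarith [hs.2]
  have hzs : z.re < s := by
    have hx' := hx
    rw [mem_ball, dist_zero_right] at hx'
    have hn1 : 0 < ‖z₀ - x‖ := by
      rw [norm_pos_iff]
      intro h
      have : z₀ = x := by linear_combination h
      rw [this] at hz₀
      linarith
    rw [dist_comm, dist_eq_norm] at hxz
    have he1 : Real.exp (-(2 * T)) < 1 := Real.exp_lt_one_iff.2 (by linarith)
    have hn2 : 1 ≤ ‖z₀ + x‖ := by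
      have h1 : ‖(2:ℂ) * z₀‖ = 2 := by simp [hz₀]
      have h2 : (2:ℂ) * z₀ = (z₀ + x) + (z₀ - x) := by ring
      have h3 := norm_add_le (z₀ + x) (z₀ - x)
      rw [← h2, h1] at h3
      linarith
    have h4 : ‖z₀ - x‖ / ‖z₀ + x‖ < Real.exp (-(2 * T)) :=
      lt_of_le_of_lt (div_le_self hn1.le hn2) hxz
    have h5 := Real.log_lt_log (div_pos hn1 (by linarith)) h4
    rw [Real.log_exp] at h5
    rw [hzre]
    linarith [hs.1]
  have hG : ∀ z ∈ S, z.re ≠ s → h z ∉ γ '' Icc (-p) p := by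
    rintro z hz hzs ⟨θ, hθ, hθz⟩
    by_cases hθ' : θ ∈ Ioo (-p) p
    · rw [hγh θ hθ'] at hθz
      have := hhi (show (⟨s, θ⟩ : ℂ) ∈ S from abs_lt.2 hθ') hz hθz
      exact hzs (by rw [← this])
    · rcases hsplit θ hθ hθ' with rfl | rfl
      · exact hend _ habs1 (by rw [hθz]; exact hhΩ z hz)
      · exact hend _ habs2 (by rw [hθz]; exact hhΩ z hz)
  have hfin := separation (Ω := Ω) (U := h '' (S ∩ {z | z.re < s})) (V := h '' (S ∩ {z | s < z.re}))
    (G := γ '' Icc (-p) p) (B := B) (a := γ p) (w := f x) (ε := ε) (R := M) ho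
    (by
      rw [← hΩeq]
      exact (convex_ball _ _).isPreconnected.image _ hd.continuousOn)
    hΩM
    (hopen _ inter_subset_left (hSo.inter (isOpen_lt (by fun_prop) (by fun_prop))))
    (hopen _ inter_subset_left (hSo.inter (isOpen_lt (by fun_prop) (by fun_prop))))
    (by
      rw [Set.disjoint_left]
      rintro _ ⟨z, ⟨hz, hz'⟩, rfl⟩ ⟨w, ⟨hw, hw'⟩, hwz⟩
      have := hhi hw hz hwz
      subst this
      exact lt_asymm (show w.re < s from hz') hw')
    (isCompact_Icc.image_of_continuousOn hγc)
    (by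
      intro y hy
      obtain ⟨x', hx', rfl⟩ := hbij.surjOn hy
      obtain ⟨z', hz', rfl, -⟩ := stripMap_surj hz₀ hx'
      rcases lt_trichotomy z'.re s with hlt | heq | hgt
      · exact Or.inl (Or.inl ⟨z', ⟨hz', hlt⟩, rfl⟩)
      · right
        refine ⟨z'.im, Ioo_subset_Icc_self (abs_lt.1 hz'), ?_⟩
        rw [hγh _ (abs_lt.1 hz'), ← heq]
      · exact Or.inl (Or.inr ⟨z', ⟨hz', hgt⟩, rfl⟩))
    (by
      rintro _ ⟨z, ⟨hz, hz'⟩, rfl⟩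
      exact ⟨hhΩ z hz, hG z hz (ne_of_lt hz')⟩)
    (by
      rintro _ ⟨z, ⟨hz, hz'⟩, rfl⟩
      exact ⟨hhΩ z hz, hG z hz (ne_of_gt hz')⟩)
    ⟨0, ⟨by simpa [hS] using hp0, by simpa using hs0⟩, by simp [hh, stripMap, hf0]⟩
    ⟨z, ⟨hzS, hzs⟩, by simp [hh, hzx]⟩
    hBconn.isPreconnected ⟨_, hBp⟩ hBsub
    (by
      rintro _ ⟨⟨θ, hθ, rfl⟩, hθΩ⟩
      by_cases hθ' : θ ∈ Ioo (-p) p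
      · exact absurd (by rw [hγh θ hθ']; exact hhΩ _ (abs_lt.2 hθ')) hθΩ
      · rcases hsplit θ hθ hθ' with rfl | rfl
        · exact hBp
        · exact hBm)
    (by
      rintro _ ⟨θ, hθ, rfl⟩
      rw [mem_ball]
      linarith [hγdd θ hθ])
    (by
      intro y hy
      rw [mem_ball]
      have := dist_le_diam_of_mem hBcomp.isBounded hy hBp
      linarith)
    (by
      by_contra hcon
      push Not at hcon
      apply hend p habs1
      apply hμΩ
      rw [mem_ball, dist_comm]
      linarith)
  exact hfin

open Filter Topology in
lemma limsup_continuum {B : ℕ → Set ℂ} {b : ℕ → ℂ} {b₀ : ℂ} {ε : ℝ} (hε : 0 ≤ ε)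
    (hBc : ∀ n, IsCompact (B n)) (hBconn : ∀ n, IsPreconnected (B n)) (hb : ∀ n, b n ∈ B n)
    (hlim : Tendsto b atTop (𝓝 b₀)) (hd : ∀ n, Metric.diam (B n) ≤ ε) :
    ∃ L : Set ℂ, IsCompact L ∧ IsConnected L ∧ b₀ ∈ L ∧ Metric.diam L ≤ 2 * ε ∧
      (∀ c : ℕ → ℂ, ∀ c₀, (∀ n, c n ∈ B n) → Tendsto c atTop (𝓝 c₀) → c₀ ∈ L) ∧
      ∀ z ∈ L, ∀ r > 0, ∀ N, ∃ n ≥ N, ∃ y ∈ B n, dist y z < r := by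
  let E : ℕ → Set ℂ := fun N => closure (⋃ n ≥ N, B n)
  let L : Set ℂ := ⋂ N, E N
  have hEanti : Antitone E := by
    intro N N' h
    apply closure_mono
    intro z hz
    simp only [mem_iUnion] at hz ⊢
    obtain ⟨n, hn, hz⟩ := hz
    exact ⟨n, le_trans h hn, hz⟩
  have hmem : ∀ c : ℕ → ℂ, ∀ c₀, (∀ n, c n ∈ B n) → Tendsto c atTop (𝓝 c₀) → c₀ ∈ L := by
    intro c c₀ hc hlc
    refine mem_iInter.2 fun N => mem_closure_of_tendsto hlc ?_
    filter_upwards [eventually_ge_atTop N] with n hn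
    simp only [mem_iUnion]
    exact ⟨n, hn, hc n⟩
  have happ : ∀ z ∈ L, ∀ r > 0, ∀ N, ∃ n ≥ N, ∃ y ∈ B n, dist y z < r := by
    intro z hz r hr N
    obtain ⟨y, hy, hyz⟩ := Metric.mem_closure_iff.1 (mem_iInter.1 hz N) r hr
    simp only [mem_iUnion] at hy
    obtain ⟨n, hn, hy⟩ := hy
    exact ⟨n, hn, y, hy, by rwa [dist_comm]⟩
  have hsub : L ⊆ closedBall b₀ ε := by
    intro z hz
    rw [mem_closedBall]
    apply le_of_forall_pos_le_add
    intro r hr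
    obtain ⟨N, hN⟩ := eventually_atTop.1 (Metric.tendsto_nhds.1 hlim (r / 2) (by linarith))
    obtain ⟨n, hn, y, hy, hyz⟩ := happ z hz (r / 2) (by linarith) N
    have h1 := hN n hn
    have h2 := (dist_le_diam_of_mem (hBc n).isBounded hy (hb n)).trans (hd n)
    have h3 := dist_triangle z y b₀
    have h4 := dist_triangle y (b n) b₀
    rw [dist_comm z y] at h3
    linarith
  have hLcl : IsClosed L := isClosed_iInter fun N => isClosed_closure
  have hLc : IsCompact L := (isCompact_closedBall b₀ ε).of_isClosed_subset hLcl hsub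
  have hb0 := hmem b b₀ hb hlim
  have hEc : ∀ N, IsCompact (E N) := by
    intro N
    obtain ⟨R, hR⟩ := (Metric.isBounded_range_of_tendsto b hlim).subset_closedBall 0
    refine (isCompact_closedBall (0:ℂ) (R + ε)).of_isClosed_subset isClosed_closure
      (closure_minimal ?_ isClosed_closedBall)
    intro z hz
    simp only [mem_iUnion] at hz
    obtain ⟨n, -, hz⟩ := hz
    have h1 := hR (mem_range_self n)
    rw [mem_closedBall] at h1 ⊢
    have h2 := (dist_le_diam_of_mem (hBc n).isBounded hz (hb n)).trans (hd n)
    linarith [dist_triangle z (b n) 0]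
  have hhalf : ∀ u v : Set ℂ, IsClosed u → IsClosed v → L ⊆ u ∪ v → Disjoint u v → b₀ ∈ u →
      L ⊆ u := by
    intro u v hu hv hLuv hdisj hbu
    obtain ⟨U, V, hU, hV, huU, hvV, hUV⟩ := normal_separation hu hv hdisj
    obtain ⟨N, hN⟩ := exists_subset_nhds_of_isCompact (V := E) hEanti.directed_ge hEc
      (U := U ∪ V) (by
        intro x hx
        refine (hU.union hV).mem_nhds ?_
        exact union_subset_union huU hvV (hLuv hx))
    obtain ⟨N', hN'⟩ := eventually_atTop.1 (hlim (hU.mem_nhds (huU hbu)))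
    intro z hz
    rcases hLuv hz with h | h
    · exact h
    · exfalso
      obtain ⟨r, hr, hrV⟩ := Metric.isOpen_iff.1 hV z (hvV h)
      obtain ⟨n, hn, y, hy, hyz⟩ := happ z hz r hr (max N N')
      have hBn : B n ⊆ U ∪ V := fun q hq => hN (subset_closure (by
        simp only [mem_iUnion]
        exact ⟨n, le_trans (le_max_left _ _) hn, hq⟩))
      have hBU := (hBconn n).subset_left_of_subset_union hU hV hUV hBn
        ⟨b n, hb n, hN' n (le_trans (le_max_right _ _) hn)⟩
      exact hUV.le_bot ⟨hBU hy, hrV hyz⟩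
  refine ⟨L, hLc, ⟨⟨b₀, hb0⟩, ?_⟩, hb0, ?_, hmem, happ⟩
  · rw [isPreconnected_iff_subset_of_fully_disjoint_closed hLcl]
    intro u v hu hv hLuv hdisj
    rcases hLuv hb0 with h | h
    · exact Or.inl (hhalf u v hu hv hLuv hdisj h)
    · exact Or.inr (hhalf v u hv hu (by rwa [union_comm]) hdisj.symm h)
  · exact (Metric.diam_mono hsub isBounded_closedBall).trans (diam_closedBall hε)

open Filter Topology in
lemma hurwitz_ball {F : ℕ → ℂ → ℂ} {f : ℂ → ℂ}
    (hlim : TendstoUniformlyOn F f atTop (ball (0:ℂ) 1))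
    (hF : ∀ n, DifferentiableOn ℂ (F n) (ball (0:ℂ) 1)) (hFi : ∀ n, InjOn (F n) (ball (0:ℂ) 1))
    (hf : DifferentiableOn ℂ f (ball (0:ℂ) 1))
    (hnc : ∃ y ∈ ball (0:ℂ) 1, ∃ z ∈ ball (0:ℂ) 1, f y ≠ f z)
    {x : ℂ} (hx : x ∈ ball (0:ℂ) 1) {r : ℝ} (hr : 0 < r) :
    ∃ η > 0, ∀ᶠ n in atTop, ball (f x) η ⊆ F n '' (ball x r ∩ ball (0:ℂ) 1) := by
  have han : AnalyticOnNhd ℂ f (ball (0:ℂ) 1) := hf.analyticOnNhd isOpen_ball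
  have hiso : ∀ᶠ z in 𝓝[≠] x, f z ≠ f x := by
    rcases (han x hx).eventually_eq_or_eventually_ne (analyticAt_const (v := f x)) with h | h
    · exfalso
      have := han.eqOn_of_preconnected_of_eventuallyEq analyticOnNhd_const
        (convex_ball _ _).isPreconnected hx h
      obtain ⟨y, hy, z, hz, hyz⟩ := hnc
      exact hyz ((this hy).trans (this hz).symm)
    · exact h
  rw [eventually_nhdsWithin_iff] at hiso
  obtain ⟨ρ₁, hρ₁, h1⟩ := Metric.eventually_nhds_iff_ball.1 hiso
  obtain ⟨ρ₂, hρ₂, h2⟩ := Metric.isOpen_iff.1 isOpen_ball x hx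
  set ρ := min r (min ρ₁ ρ₂) / 2 with hρ
  have hρ0 : 0 < ρ := by positivity
  have hm1 : min r (min ρ₁ ρ₂) ≤ r := min_le_left _ _
  have hm2 : min r (min ρ₁ ρ₂) ≤ ρ₁ := (min_le_right _ _).trans (min_le_left _ _)
  have hm3 : min r (min ρ₁ ρ₂) ≤ ρ₂ := (min_le_right _ _).trans (min_le_right _ _)
  have hcb : closedBall x ρ ⊆ ball (0:ℂ) 1 :=
    (closedBall_subset_ball (by linarith)).trans h2
  have hsph : (sphere x ρ).Nonempty := NormedSpace.sphere_nonempty.2 hρ0.le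
  obtain ⟨q, hq, hqmin⟩ := (isCompact_sphere x ρ).exists_isMinOn hsph
    (f := fun z => ‖f z - f x‖) (by
      refine ((hf.continuousOn.mono (sphere_subset_closedBall.trans hcb)).sub
        continuousOn_const).norm)
  set m := ‖f q - f x‖ with hm
  have hm0 : 0 < m := by
    rw [hm, norm_pos_iff, sub_ne_zero]
    refine h1 q ?_ ?_
    · rw [mem_ball]
      rw [mem_sphere] at hq
      linarith
    · rintro rfl
      rw [mem_sphere, dist_self] at hq
      linarith
  refine ⟨m / 8, by linarith, ?_⟩
  filter_upwards [Metric.tendstoUniformlyOn_iff.1 hlim (m / 8) (by linarith)] with n hn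
  have hdc : DiffContOnCl ℂ (F n) (ball x ρ) := by
    apply DifferentiableOn.diffContOnCl
    rw [closure_ball x hρ0.ne']
    exact (hF n).mono hcb
  have key := hdc.ball_subset_image_closedBall hρ0 (ε := 3 * m / 4) (by
    intro z hz
    have a1 : m ≤ ‖f z - f x‖ := hqmin hz
    have a2 := hn z (hcb (sphere_subset_closedBall hz))
    have a3 := hn x hx
    rw [← dist_eq_norm] at a1 ⊢
    have a4 := dist_triangle4 (f z) (F n z) (F n x) (f x)
    rw [dist_comm (F n x) (f x)] at a4
    linarith) (by
    have : ∃ᶠ z in 𝓝[≠] x, F n z ≠ F n x := by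
      apply Eventually.frequently
      have hmem : ball (0:ℂ) 1 ∈ 𝓝[≠] x := nhdsWithin_le_nhds (isOpen_ball.mem_nhds hx)
      filter_upwards [hmem, self_mem_nhdsWithin] with z hz hzx hzz
      exact hzx (hFi n hz hx hzz)
    exact this.filter_mono nhdsWithin_le_nhds)
  intro w hw
  obtain ⟨z, hz, hzw⟩ := key (show w ∈ ball (F n x) (3 * m / 4 / 2) by
    rw [mem_ball] at hw ⊢
    have := hn x hx
    linarith [dist_triangle w (f x) (F n x)])
  refine ⟨z, ⟨?_, hcb hz⟩, hzw⟩
  rw [mem_closedBall] at hz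
  rw [mem_ball]
  linarith

lemma image_simplyConnected {f : ℂ → ℂ} (hd : DifferentiableOn ℂ f (ball (0:ℂ) 1))
    (hi : InjOn f (ball (0:ℂ) 1)) : SimplyConnectedSpace (f '' ball (0:ℂ) 1) := by
  have hopen := image_open_ball hd hi
  let e : ball (0:ℂ) 1 → ℂ := fun z => f z
  have he : Topology.IsOpenEmbedding e := by
    refine Topology.IsOpenEmbedding.of_continuous_injective_isOpenMap ?_ ?_ ?_
    · exact continuousOn_iff_continuous_restrict.1 hd.continuousOn
    · intro x y hxy
      exact Subtype.ext (hi x.2 y.2 hxy)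
    · intro s hs
      have : e '' s = f '' (Subtype.val '' s) := by
        rw [image_image]
      rw [this]
      refine hopen _ ?_ (isOpen_ball.isOpenMap_subtype_val s hs)
      rintro _ ⟨x, -, rfl⟩
      exact x.2
  have hr : range e = f '' ball (0:ℂ) 1 := by
    rw [image_eq_range]
  rw [← hr]
  have : ContractibleSpace (ball (0:ℂ) 1) :=
    (convex_ball (0:ℂ) 1).contractibleSpace ⟨0, by simp⟩
  exact he.isEmbedding.toHomeomorph.symm.toHomotopyEquiv.simplyConnectedSpace

open Filter Topology in
lemma equicont_ball (μ M : ℝ) (hμ : 0 < μ) (hμM : μ < M)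
    (Ω : ℕ → Set ℂ) (Φ : ℕ → ℂ → ℂ)
    (hopen : ∀ n, IsOpen (Ω n))
    (hsub : ∀ n, ball (0:ℂ) μ ⊆ Ω n ∧ Ω n ⊆ ball (0:ℂ) M)
    (hulc : UnifLocallyConnectedSeq (fun n => (Ω n)ᶜ))
    (hΦhol : ∀ n, DifferentiableOn ℂ (Φ n) (ball (0:ℂ) 1))
    (hΦbij : ∀ n, Set.BijOn (Φ n) (ball (0:ℂ) 1) (Ω n))
    (hΦ0 : ∀ n, Φ n 0 = 0) : EquicontinuousOnSet Φ (ball (0:ℂ) 1) := by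
  intro ε hε
  have hM : 0 < M := hμ.trans hμM
  obtain ⟨ε₁, hε₁, h1, h2⟩ : ∃ ε₁ > 0, ε₁ ≤ ε / 2 ∧ ε₁ ≤ μ :=
    ⟨min (ε / 2) μ, lt_min (by positivity) hμ, min_le_left _ _, min_le_right _ _⟩
  obtain ⟨δ₀, hδ₀, hj⟩ := hulc (ε₁ / 4) (by positivity)
  obtain ⟨ρ₀, hρ₀, hosc⟩ := local_osc μ M ε₁ δ₀ hε₁ h2 hδ₀
  obtain ⟨ρ, hρ, hρ1, hρ2⟩ : ∃ ρ > 0, ρ ≤ ρ₀ ∧ ρ ≤ 1 :=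
    ⟨min ρ₀ 1, lt_min hρ₀ one_pos, min_le_left _ _, min_le_right _ _⟩
  refine ⟨min (ρ / 2) (ε * ρ / (8 * M)), lt_min (by positivity) (by positivity), ?_⟩
  intro x hx y hy hxy n
  have hxy1 := hxy.trans_le (min_le_left _ _)
  have hxy2 := hxy.trans_le (min_le_right _ _)
  have hx1 : ‖x‖ < 1 := by simpa using hx
  by_cases hc : 1 - ρ / 2 < ‖x‖
  · have hxpos : 0 < ‖x‖ := by linarith
    have hd : dist x (x / (‖x‖ : ℂ)) = 1 - ‖x‖ := by
      rw [dist_comm, dist_eq_norm]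
      have : x / (‖x‖ : ℂ) - x = (((1 - ‖x‖) / ‖x‖ : ℝ) : ℂ) * x := by
        have : (‖x‖ : ℂ) ≠ 0 := by exact_mod_cast hxpos.ne'
        push_cast
        field_simp
      rw [this, norm_mul, Complex.norm_real, Real.norm_of_nonneg (by
        apply div_nonneg <;> linarith)]
      field_simp
    obtain ⟨a, ha⟩ := hosc (Ω n) (Φ n) (hopen n) (hsub n).1 (hsub n).2 (hj n) (hΦhol n)
      (hΦbij n) (hΦ0 n) (x / (‖x‖ : ℂ)) (by
        rw [norm_div, Complex.norm_real, norm_norm, div_self hxpos.ne'])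
    have hax := ha x hx (by rw [hd]; linarith)
    have hay := ha y hy (by
      have := dist_triangle_left y (x / (‖x‖ : ℂ)) x
      rw [hd] at this
      linarith)
    have := dist_triangle_right (Φ n x) (Φ n y) a
    linarith
  · have hsb : ball x (ρ / 2) ⊆ ball (0:ℂ) 1 := by
      apply ball_subset_ball'
      rw [dist_zero_right]
      linarith
    have hmaps : MapsTo (Φ n) (ball x (ρ / 2)) (closedBall (Φ n x) (2 * M)) := by
      intro w hw
      have e1 := (hsub n).2 ((hΦbij n).mapsTo (hsb hw))
      have e2 := (hsub n).2 ((hΦbij n).mapsTo hx)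
      rw [mem_ball] at e1 e2
      rw [mem_closedBall]
      have := dist_triangle_right (Φ n w) (Φ n x) 0
      linarith
    have hyb : y ∈ ball x (ρ / 2) := by rwa [mem_ball, dist_comm]
    have := Complex.dist_le_div_mul_dist_of_mapsTo_ball ((hΦhol n).mono hsb) hmaps hyb
    rw [dist_comm (Φ n y), dist_comm y x] at this
    refine this.trans_lt ?_
    calc 2 * M / (ρ / 2) * dist x y < 2 * M / (ρ / 2) * (ε * ρ / (8 * M)) := by gcongr
      _ = ε / 2 := by field_simp; norm_num
      _ < ε := by linarith

open Filter Topology in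
lemma extend_equicont (Φ : ℕ → ℂ → ℂ) (h : EquicontinuousOnSet Φ (ball (0:ℂ) 1)) :
    ∃ Ψ : ℕ → ℂ → ℂ,
      (∀ n, ContinuousOn (Ψ n) (closedBall (0:ℂ) 1) ∧
        Set.EqOn (Ψ n) (Φ n) (ball (0:ℂ) 1)) ∧
      EquicontinuousOnSet Ψ (closedBall (0:ℂ) 1) ∧
      ∀ n, ∀ x ∈ closedBall (0:ℂ) 1, Tendsto (Φ n) (𝓝[ball 0 1] x) (𝓝 (Ψ n x)) := by
  have hcl : closure (ball (0:ℂ) 1) = closedBall 0 1 := closure_ball _ one_ne_zero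
  have huc : ∀ n, UniformContinuousOn (Φ n) (ball (0:ℂ) 1) := by
    intro n
    rw [Metric.uniformContinuousOn_iff]
    intro ε hε
    obtain ⟨δ, hδ, hh⟩ := h ε hε
    exact ⟨δ, hδ, fun x hx y hy hxy => hh x hx y hy hxy n⟩
  have hne : ∀ x ∈ closedBall (0:ℂ) 1, (𝓝[ball 0 1] x).NeBot := by
    intro x hx
    rw [← hcl] at hx
    exact mem_closure_iff_nhdsWithin_neBot.mp hx
  have hlim : ∀ n, ∀ x ∈ closedBall (0:ℂ) 1, ∃ y, Tendsto (Φ n) (𝓝[ball 0 1] x) (𝓝 y) := by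
    intro n x hx
    have := hne x hx
    have hC : Cauchy (𝓝[ball (0:ℂ) 1] x) := cauchy_nhds.mono nhdsWithin_le_nhds
    have hC2 : Cauchy (map (Φ n) (𝓝[ball (0:ℂ) 1] x)) := by
      refine (Metric.cauchy_iff).2 ⟨inferInstance, fun ε hε => ?_⟩
      obtain ⟨δ, hδ, hh⟩ := h ε hε
      refine ⟨Φ n '' (ball 0 1 ∩ ball x (δ / 2)), image_mem_map
        (inter_mem self_mem_nhdsWithin (mem_nhdsWithin_of_mem_nhds (ball_mem_nhds _ (by positivity)))), ?_⟩
      rintro _ ⟨a, ha, rfl⟩ _ ⟨b, hb, rfl⟩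
      refine hh a ha.1 b hb.1 ?_ n
      have := dist_triangle_right a b x
      have h1 := ha.2
      have h2 := hb.2
      rw [mem_ball] at h1 h2
      linarith
    exact CompleteSpace.complete hC2
  have hT : ∀ n, ∀ x ∈ closedBall (0:ℂ) 1,
      Tendsto (Φ n) (𝓝[ball 0 1] x) (𝓝 (extendFrom (ball 0 1) (Φ n) x)) :=
    fun n x hx => tendsto_extendFrom (hlim n x hx)
  refine ⟨fun n => extendFrom (ball 0 1) (Φ n), fun n => ⟨?_, ?_⟩, ?_, hT⟩
  · exact continuousOn_extendFrom hcl.ge (hlim n)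
  · exact extendFrom_extends (huc n).continuousOn
  · intro ε hε
    obtain ⟨δ, hδ, hh⟩ := h (ε / 2) (by positivity)
    refine ⟨δ, hδ, fun x hx y hy hxy n => ?_⟩
    have := hne x hx
    have := hne y hy
    refine lt_of_le_of_lt ?_ (half_lt_self hε)
    have ht : Tendsto (fun p : ℂ × ℂ => dist (Φ n p.1) (Φ n p.2))
        (𝓝[ball 0 1] x ×ˢ 𝓝[ball 0 1] y)
        (𝓝 (dist (extendFrom (ball 0 1) (Φ n) x) (extendFrom (ball 0 1) (Φ n) y))) :=
      ((hT n x hx).comp tendsto_fst).dist ((hT n y hy).comp tendsto_snd)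
    refine le_of_tendsto ht ?_
    have hd : ∀ᶠ p : ℂ × ℂ in 𝓝[ball 0 1] x ×ˢ 𝓝[ball 0 1] y, dist p.1 p.2 < δ := by
      have : Tendsto (fun p : ℂ × ℂ => dist p.1 p.2) (𝓝[ball 0 1] x ×ˢ 𝓝[ball 0 1] y)
          (𝓝 (dist x y)) :=
        (tendsto_fst.mono_right nhdsWithin_le_nhds).dist
          (tendsto_snd.mono_right nhdsWithin_le_nhds)
      exact this.eventually_lt_const hxy
    have hm : ∀ᶠ p : ℂ × ℂ in 𝓝[ball 0 1] x ×ˢ 𝓝[ball 0 1] y,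
        p.1 ∈ ball (0:ℂ) 1 ∧ p.2 ∈ ball (0:ℂ) 1 :=
      prod_mem_prod self_mem_nhdsWithin self_mem_nhdsWithin
    filter_upwards [hd, hm] with p hp hq
    exact (hh p.1 hq.1 p.2 hq.2 hp n).le

open Filter Topology in
lemma ascoli_seq (Ψ : ℕ → ℂ → ℂ) (M : ℝ)
    (hc : ∀ n, ContinuousOn (Ψ n) (closedBall (0:ℂ) 1))
    (he : EquicontinuousOnSet Ψ (closedBall (0:ℂ) 1))
    (hb : ∀ n, ∀ x ∈ closedBall (0:ℂ) 1, Ψ n x ∈ closedBall (0:ℂ) M) :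
    ∃ k : ℕ → ℕ, StrictMono k ∧ ∃ Φlim : ℂ → ℂ,
      ContinuousOn Φlim (closedBall (0:ℂ) 1) ∧
      TendstoUniformlyOn (fun m => Ψ (k m)) Φlim Filter.atTop (closedBall (0:ℂ) 1) := by
  have : CompactSpace (closedBall (0:ℂ) 1) := isCompact_iff_compactSpace.1 (isCompact_closedBall _ _)
  let F : ℕ → BoundedContinuousFunction (closedBall (0:ℂ) 1) ℂ := fun n =>
    BoundedContinuousFunction.mkOfCompact ⟨fun x => Ψ n x, (hc n).comp_continuous continuous_subtype_val (fun x => x.2)⟩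
  have hK : IsCompact (closure (range F)) := by
    refine BoundedContinuousFunction.arzela_ascoli (closedBall (0:ℂ) M) (isCompact_closedBall _ _)
      (range F) ?_ ?_
    · rintro _ x ⟨n, rfl⟩
      exact hb n x x.2
    · intro x
      rw [Metric.equicontinuousAt_iff_right]
      intro ε hε
      obtain ⟨δ, hδ, hh⟩ := he ε hε
      filter_upwards [ball_mem_nhds x hδ] with y hy
      rintro ⟨_, n, rfl⟩
      exact hh x x.2 y y.2 (by rw [dist_comm]; exact hy) n
  obtain ⟨g, -, k, hk, hg⟩ := hK.tendsto_subseq (fun n => subset_closure (mem_range_self (f := F) n))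
  have hu := BoundedContinuousFunction.tendsto_iff_tendstoUniformly.1 hg
  classical
  refine ⟨k, hk, fun z => if h : z ∈ closedBall (0:ℂ) 1 then g ⟨z, h⟩ else 0, ?_⟩
  have hT : TendstoUniformlyOn (fun m => Ψ (k m))
      (fun z => if h : z ∈ closedBall (0:ℂ) 1 then g ⟨z, h⟩ else 0) atTop (closedBall (0:ℂ) 1) := by
    rw [tendstoUniformlyOn_iff_tendstoUniformly_comp_coe]
    convert hu using 1
    · rfl
    · ext x
      have hx : (x : ℂ) ∈ closedBall (0:ℂ) 1 := x.2
      simp only [Function.comp, dif_pos hx]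
  exact ⟨hT.continuousOn (Eventually.of_forall fun n => hc _).frequently, hT⟩

theorem stmt0 (μ M : ℝ) (hμ : 0 < μ) (hμM : μ < M)
    (Ω : ℕ → Set ℂ) (Φ : ℕ → ℂ → ℂ)
    (hopen : ∀ n, IsOpen (Ω n))
    (hsc : ∀ n, SimplyConnectedSpace (Ω n))
    (hsub : ∀ n, ball (0:ℂ) μ ⊆ Ω n ∧ Ω n ⊆ ball (0:ℂ) M)
    (hulc : UnifLocallyConnectedSeq (fun n => (Ω n)ᶜ))
    (hΦhol : ∀ n, DifferentiableOn ℂ (Φ n) (ball (0:ℂ) 1))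
    (hΦbij : ∀ n, Set.BijOn (Φ n) (ball (0:ℂ) 1) (Ω n))
    (hΦ0 : ∀ n, Φ n 0 = 0)
    (hΦ' : ∀ n, ∃ c : ℝ, 0 < c ∧ deriv (Φ n) 0 = (c : ℂ)) :
    ∃ Ψ : ℕ → ℂ → ℂ,
      (∀ n, ContinuousOn (Ψ n) (closedBall (0:ℂ) 1) ∧
        Set.EqOn (Ψ n) (Φ n) (ball (0:ℂ) 1)) ∧
      EquicontinuousOnSet Ψ (closedBall (0:ℂ) 1) ∧
      ∃ k : ℕ → ℕ, StrictMono k ∧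
        ∃ Φlim : ℂ → ℂ,
          ContinuousOn Φlim (closedBall (0:ℂ) 1) ∧
          TendstoUniformlyOn (fun m => Ψ (k m)) Φlim Filter.atTop (closedBall (0:ℂ) 1) ∧
          Set.InjOn Φlim (ball (0:ℂ) 1) ∧
          DifferentiableOn ℂ Φlim (ball (0:ℂ) 1) ∧
          IsOpen (Φlim '' ball (0:ℂ) 1) ∧
          SimplyConnectedSpace (Φlim '' ball (0:ℂ) 1) ∧
          LocallyConnectedSet ((Φlim '' ball (0:ℂ) 1)ᶜ) := by
  classical
  have hM : 0 < M := hμ.trans hμM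
  obtain ⟨Ψ, hΨ, hΨe, hΨT⟩ := extend_equicont Φ
    (equicont_ball μ M hμ hμM Ω Φ hopen hsub hulc hΦhol hΦbij hΦ0)
  have hbs : ball (0:ℂ) 1 ⊆ closedBall (0:ℂ) 1 := ball_subset_closedBall
  have hne : ∀ x ∈ closedBall (0:ℂ) 1, (nhdsWithin x (ball (0:ℂ) 1)).NeBot := by
    intro x hx
    rw [← closure_ball (0:ℂ) one_ne_zero] at hx
    exact mem_closure_iff_nhdsWithin_neBot.mp hx
  have hbd : ∀ n, ∀ x ∈ closedBall (0:ℂ) 1, Ψ n x ∈ closedBall (0:ℂ) M := by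
    intro n x hx
    have := hne x hx
    refine isClosed_closedBall.mem_of_tendsto (hΨT n x hx) ?_
    filter_upwards [self_mem_nhdsWithin] with y hy
    exact ball_subset_closedBall ((hsub n).2 ((hΦbij n).mapsTo hy))
  obtain ⟨k, hk, Φlim, hcont, hunif⟩ := ascoli_seq Ψ M (fun n => (hΨ n).1) hΨe hbd
  refine ⟨Ψ, hΨ, hΨe, k, hk, Φlim, hcont, hunif, ?_⟩
  have hΨd : ∀ n, DifferentiableOn ℂ (Ψ n) (ball (0:ℂ) 1) :=
    fun n => (hΦhol n).congr (hΨ n).2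
  have hΨi : ∀ n, InjOn (Ψ n) (ball (0:ℂ) 1) :=
    fun n => (hΦbij n).injOn.congr (hΨ n).2.symm
  have hΨim : ∀ n, Ψ n '' ball (0:ℂ) 1 = Ω n := by
    intro n
    rw [(hΨ n).2.image_eq]
    exact (hΦbij n).image_eq
  have hub : TendstoUniformlyOn (fun m => Ψ (k m)) Φlim Filter.atTop (ball (0:ℂ) 1) :=
    hunif.mono hbs
  have hpt : ∀ x ∈ closedBall (0:ℂ) 1,
      Filter.Tendsto (fun m => Ψ (k m) x) Filter.atTop (nhds (Φlim x)) :=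
    fun x hx => hunif.tendsto_at hx
  have hdiff : DifferentiableOn ℂ Φlim (ball (0:ℂ) 1) :=
    hub.tendstoLocallyUniformlyOn.differentiableOn
      (Filter.Eventually.of_forall fun n => hΨd (k n)) isOpen_ball
  have h0 : (0:ℂ) ∈ ball (0:ℂ) 1 := mem_ball_self one_pos
  have hlim0 : Φlim 0 = 0 := by
    have h1 := hpt 0 (hbs h0)
    have h2 : (fun m => Ψ (k m) 0) = fun _ => (0:ℂ) := by
      ext m
      rw [(hΨ (k m)).2 h0, hΦ0]
    rw [h2] at h1
    exact tendsto_nhds_unique h1 tendsto_const_nhds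
  have hnc : ∃ y ∈ ball (0:ℂ) 1, ∃ z ∈ ball (0:ℂ) 1, Φlim y ≠ Φlim z := by
    by_contra hcon
    push Not at hcon
    obtain ⟨n, hn⟩ := (Metric.tendstoUniformlyOn_iff.1 hub (μ / 2) (by positivity)).exists
    have hmem : ((μ / 2 : ℝ) : ℂ) ∈ ball (0:ℂ) μ := by
      rw [mem_ball, dist_zero_right, Complex.norm_real, Real.norm_of_nonneg (by positivity)]
      linarith
    have := (hsub (k n)).1 hmem
    rw [← hΨim] at this
    obtain ⟨z, hz, hzz⟩ := this
    have h1 := hn z hz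
    rw [hcon z hz 0 h0, hlim0, hzz, dist_zero_left, Complex.norm_real,
      Real.norm_of_nonneg (by positivity)] at h1
    exact lt_irrefl _ h1
  have hinj : InjOn Φlim (ball (0:ℂ) 1) := by
    intro x hx y hy hxy
    by_contra hne'
    have hr : 0 < dist x y / 2 := half_pos (dist_pos.2 hne')
    obtain ⟨η₁, hη₁, h1⟩ := hurwitz_ball hub (fun n => hΨd (k n)) (fun n => hΨi (k n)) hdiff hnc hx hr
    obtain ⟨η₂, hη₂, h2⟩ := hurwitz_ball hub (fun n => hΨd (k n)) (fun n => hΨi (k n)) hdiff hnc hy hr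
    obtain ⟨n, hn1, hn2⟩ := (h1.and h2).exists
    obtain ⟨u, hu, hu'⟩ := hn1 (mem_ball_self hη₁)
    obtain ⟨v, hv, hv'⟩ := hn2 (mem_ball_self hη₂)
    have huv : u = v := hΨi (k n) hu.2 hv.2 (by rw [hu', hv', hxy])
    subst huv
    have e1 := hu.1
    have e2 := hv.1
    rw [mem_ball] at e1 e2
    have := dist_triangle_left x y u
    linarith
  refine ⟨hinj, hdiff, image_open_ball hdiff hinj _ subset_rfl isOpen_ball,
    image_simplyConnected hdiff hinj, ?_⟩
  have happrox : ∀ b ∈ (Φlim '' ball (0:ℂ) 1)ᶜ, ∃ bn : ℕ → ℂ,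
      Filter.Tendsto bn Filter.atTop (nhds b) ∧ ∀ᶠ n in Filter.atTop, bn n ∈ (Ω (k n))ᶜ := by
    intro b hb
    by_cases hbc : b ∈ Φlim '' closedBall (0:ℂ) 1
    · obtain ⟨x, hx, rfl⟩ := hbc
      have hx1 : ‖x‖ = 1 := by
        refine le_antisymm (by simpa using hx) (not_lt.1 fun hlt => hb ⟨x, by simpa using hlt, rfl⟩)
      refine ⟨fun n => Ψ (k n) x, hpt x hx, Filter.Eventually.of_forall fun n => ?_⟩
      have := hne x hx
      have h1 := bdry_not_mem (hΦhol (k n)) (hΦbij (k n)).injOn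
        (l := nhdsWithin x (ball (0:ℂ) 1)) (u := fun t => t) (x := x) (b := Ψ (k n) x)
        (Filter.tendsto_id.mono_left nhdsWithin_le_nhds) self_mem_nhdsWithin hx1 (hΨT (k n) x hx)
      rwa [(hΦbij (k n)).image_eq] at h1
    · have hcl : IsClosed (Φlim '' closedBall (0:ℂ) 1) :=
        ((isCompact_closedBall _ _).image_of_continuousOn hcont).isClosed
      obtain ⟨d, hd, hdb⟩ := Metric.isOpen_iff.1 hcl.isOpen_compl b hbc
      refine ⟨fun _ => b, tendsto_const_nhds, ?_⟩
      filter_upwards [Metric.tendstoUniformlyOn_iff.1 hub d hd] with n hn hbn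
      rw [← hΨim] at hbn
      obtain ⟨z, hz, hzb⟩ := hbn
      have h1 := hn z hz
      rw [hzb] at h1
      exact hdb h1 ⟨z, hbs hz, rfl⟩
  intro ε hε
  obtain ⟨δ, hδ, hj⟩ := hulc (ε / 2) (by positivity)
  refine ⟨δ, hδ, fun b hb c hc hbc => ?_⟩
  obtain ⟨bn, hbn, hbn'⟩ := happrox b hb
  obtain ⟨cn, hcn, hcn'⟩ := happrox c hc
  obtain ⟨N, hN⟩ := Filter.eventually_atTop.1
    ((hbn'.and hcn').and ((hbn.dist hcn).eventually_lt_const hbc))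
  have hB : ∀ n, JoinedByContinuumIn (Ω (k (n + N)))ᶜ (bn (n + N)) (cn (n + N)) (ε / 2) := by
    intro n
    obtain ⟨⟨e1, e2⟩, e3⟩ := hN (n + N) (Nat.le_add_left _ _)
    exact hj (k (n + N)) _ e1 _ e2 e3
  choose B hBs hBc hBconn hBb hBcn hBd using hB
  obtain ⟨L, hLc, hLconn, hbL, hLd, hLm, hLa⟩ := limsup_continuum (by positivity) hBc
    (fun n => (hBconn n).isPreconnected) hBb (hbn.comp (Filter.tendsto_add_atTop_nat N)) hBd
  refine ⟨L, ?_, hLc, hLconn, hbL,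
    hLm _ c hBcn (hcn.comp (Filter.tendsto_add_atTop_nat N)), by linarith⟩
  rintro _ hzL ⟨x, hx, rfl⟩
  obtain ⟨η, hη, h1⟩ := hurwitz_ball hub (fun n => hΨd (k n)) (fun n => hΨi (k n)) hdiff hnc hx
    one_pos
  obtain ⟨N', hN'⟩ := Filter.eventually_atTop.1 h1
  obtain ⟨n, hn, y, hy, hyz⟩ := hLa _ hzL η hη N'
  obtain ⟨t, ht, hty⟩ := hN' (n + N) (by omega) hyz
  refine hBs n hy ?_
  rw [← hΨim, ← hty]
  exact ⟨t, ht.2, rfl⟩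
end

section
/- Let μ > 0 and let Φ_n : 𝔻 → ℂ (n ≥ 1) be holomorphic injective maps such that B(0,μ) ⊆ Φ_n(𝔻) for every n. Suppose Φ_n → Φ uniformly on 𝔻. Then Φ is holomorphic on 𝔻, nonconstant, and injective on 𝔻, and the image Φ(𝔻) is an open, simply connected subset of ℂ. -/
open Complex Metric Set

lemma exists_sphere_aux {f : ℂ → ℂ} (hf : DifferentiableOn ℂ f (ball (0:ℂ) 1))
    (hne : ∃ z ∈ ball (0:ℂ) 1, ∃ w ∈ ball (0:ℂ) 1, f z ≠ f w)
    {a : ℂ} (ha : a ∈ ball (0:ℂ) 1) {d : ℝ} (hd : 0 < d) :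
    ∃ r, 0 < r ∧ r < d ∧ closedBall a r ⊆ ball (0:ℂ) 1 ∧
      ∃ δ, 0 < δ ∧ ∀ z ∈ sphere a r, δ ≤ ‖f z - f a‖ := by
  have han : AnalyticOnNhd ℂ f (ball (0:ℂ) 1) := hf.analyticOnNhd isOpen_ball
  have hev : ∀ᶠ z in nhdsWithin a {a}ᶜ, f z ≠ f a := by
    by_contra hcon
    have hfr : ∃ᶠ z in nhdsWithin a {a}ᶜ, f z = (fun _ => f a) z := by
      exact Filter.not_eventually.1 hcon |>.mono fun z hz => not_not.1 hz
    have heq := han.eqOn_of_preconnected_of_frequently_eq (fun _ _ => analyticAt_const)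
      (convex_ball (0:ℂ) 1).isPreconnected ha hfr
    obtain ⟨z, hz, w, hw, h⟩ := hne
    exact h ((heq hz).trans (heq hw).symm)
  rw [eventually_nhdsWithin_iff, Metric.eventually_nhds_iff] at hev
  obtain ⟨ε, hε, hev⟩ := hev
  obtain ⟨ρ, hρ, hsub⟩ := Metric.isOpen_iff.1 isOpen_ball a ha
  obtain ⟨r, hr0, hr⟩ := exists_between (lt_min (lt_min hε hρ) hd)
  simp only [lt_min_iff] at hr
  have hcb : closedBall a r ⊆ ball (0:ℂ) 1 := (closedBall_subset_ball hr.1.2).trans hsub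
  refine ⟨r, hr0, hr.2, hcb, ?_⟩
  have hcont : ContinuousOn (fun z => ‖f z - f a‖) (sphere a r) :=
    ((hf.continuousOn.mono (sphere_subset_closedBall.trans hcb)).sub continuousOn_const).norm
  obtain ⟨z₀, hz₀, hmin⟩ := (isCompact_sphere a r).exists_isMinOn
    (NormedSpace.sphere_nonempty.2 hr0.le) hcont
  refine ⟨‖f z₀ - f a‖, ?_, fun z hz => hmin hz⟩
  rw [norm_pos_iff, sub_ne_zero]
  refine hev ?_ ?_
  · rw [mem_sphere.1 hz₀]; exact hr.1.1
  · rintro rfl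
    simp at hz₀
    linarith

lemma hits_aux {Φ : ℕ → ℂ → ℂ} {Φlim : ℂ → ℂ}
    (hhol : ∀ n, DifferentiableOn ℂ (Φ n) (ball (0:ℂ) 1))
    (hinj : ∀ n, Set.InjOn (Φ n) (ball (0:ℂ) 1))
    (hconv : TendstoUniformlyOn Φ Φlim Filter.atTop (ball (0:ℂ) 1))
    {a : ℂ} {r δ : ℝ} (hr : 0 < r) (hcb : closedBall a r ⊆ ball (0:ℂ) 1) (hδ : 0 < δ)
    (hs : ∀ z ∈ sphere a r, δ ≤ ‖Φlim z - Φlim a‖) :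
    ∀ᶠ n in Filter.atTop, ∃ z ∈ closedBall a r, Φ n z = Φlim a := by
  have h8 : 0 < δ / 8 := by positivity
  filter_upwards [Metric.tendstoUniformlyOn_iff.1 hconv (δ / 8) h8] with n hn
  have haD : a ∈ ball (0:ℂ) 1 := hcb (mem_closedBall_self hr.le)
  have hd : DiffContOnCl ℂ (Φ n) (ball a r) :=
    ((hhol n).mono (by rwa [closure_ball a hr.ne'])).diffContOnCl
  have hsph : ∀ z ∈ sphere a r, δ / 2 ≤ ‖Φ n z - Φ n a‖ := by
    intro z hz
    have h1 := hn z (hcb (sphere_subset_closedBall hz))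
    have h2 := hn a haD
    have h3 := hs z hz
    rw [← dist_eq_norm] at h3 ⊢
    have h4 := dist_triangle4 (Φlim z) (Φ n z) (Φ n a) (Φlim a)
    rw [dist_comm (Φ n a)] at h4
    linarith
  have hfr : ∃ᶠ z in nhds a, Φ n z ≠ Φ n a := by
    have : ∃ᶠ z in nhdsWithin a {a}ᶜ, Φ n z ≠ Φ n a := by
      apply Filter.Eventually.frequently
      filter_upwards [self_mem_nhdsWithin,
        nhdsWithin_le_nhds (isOpen_ball.mem_nhds haD)] with z hz hzD h
      exact hz (hinj n hzD haD h)
    exact this.filter_mono nhdsWithin_le_nhds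
  have := hd.ball_subset_image_closedBall hr hsph hfr
  have hmem : Φlim a ∈ ball (Φ n a) (δ / 2 / 2) := by
    have := hn a haD
    rw [mem_ball]; linarith
  exact this hmem

theorem stmt1 (μ : ℝ) (hμ : 0 < μ) (Φ : ℕ → ℂ → ℂ) (Φlim : ℂ → ℂ)
    (hhol : ∀ n, DifferentiableOn ℂ (Φ n) (ball (0:ℂ) 1))
    (hinj : ∀ n, Set.InjOn (Φ n) (ball (0:ℂ) 1))
    (hcov : ∀ n, ball (0:ℂ) μ ⊆ Φ n '' ball (0:ℂ) 1)
    (hconv : TendstoUniformlyOn Φ Φlim Filter.atTop (ball (0:ℂ) 1)) :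
    DifferentiableOn ℂ Φlim (ball (0:ℂ) 1) ∧
    (∃ z ∈ ball (0:ℂ) 1, ∃ w ∈ ball (0:ℂ) 1, Φlim z ≠ Φlim w) ∧
    Set.InjOn Φlim (ball (0:ℂ) 1) ∧
    IsOpen (Φlim '' ball (0:ℂ) 1) ∧
    SimplyConnectedSpace (Φlim '' ball (0:ℂ) 1) := by
  have hdiff : DifferentiableOn ℂ Φlim (ball (0:ℂ) 1) :=
    hconv.tendstoLocallyUniformlyOn.differentiableOn (Filter.Eventually.of_forall hhol) isOpen_ball
  have hne : ∃ z ∈ ball (0:ℂ) 1, ∃ w ∈ ball (0:ℂ) 1, Φlim z ≠ Φlim w := by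
    by_contra! hc
    obtain ⟨n, hn⟩ := (Metric.tendstoUniformlyOn_iff.1 hconv (μ / 4) (by positivity)).exists
    obtain ⟨z, hz, hz0⟩ := hcov n (mem_ball_self hμ)
    have hm : ((μ / 2 : ℝ) : ℂ) ∈ ball (0:ℂ) μ := by
      rw [mem_ball_zero_iff, Complex.norm_real, Real.norm_of_nonneg (by positivity)]
      linarith
    obtain ⟨w, hw, hw0⟩ := hcov n hm
    have h1 := hn z hz
    have h2 := hn w hw
    rw [hz0, hc z hz w hw] at h1
    rw [hw0] at h2
    have h3 := dist_triangle_left ((μ / 2 : ℝ) : ℂ) 0 (Φlim w)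
    rw [dist_zero_right, Complex.norm_real, Real.norm_of_nonneg (by positivity)] at h3
    linarith
  have hinjl : Set.InjOn Φlim (ball (0:ℂ) 1) := by
    intro a ha b hb hab
    by_contra hne'
    have hd : 0 < dist a b / 2 := by have := dist_pos.2 hne'; positivity
    obtain ⟨r, hr, hrd, hcb, δ, hδ, hs⟩ := exists_sphere_aux hdiff hne ha hd
    obtain ⟨r', hr', hrd', hcb', δ', hδ', hs'⟩ := exists_sphere_aux hdiff hne hb hd
    obtain ⟨n, ⟨z, hz, hz1⟩, ⟨w, hw, hw1⟩⟩ := ((hits_aux hhol hinj hconv hr hcb hδ hs).and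
      (hits_aux hhol hinj hconv hr' hcb' hδ' hs')).exists
    have hzw : z = w := hinj n (hcb hz) (hcb' hw) (by rw [hz1, hw1, hab])
    subst hzw
    have := dist_triangle_left a b z
    rw [mem_closedBall] at hz hw
    linarith
  have hopen : ∀ s ⊆ ball (0:ℂ) 1, IsOpen s → IsOpen (Φlim '' s) := by
    rcases (hdiff.analyticOnNhd isOpen_ball).is_constant_or_isOpen
      (convex_ball (0:ℂ) 1).isPreconnected with ⟨w, hw⟩ | h
    · obtain ⟨z, hz, w', hw', h⟩ := hne
      exact absurd ((hw z hz).trans (hw w' hw').symm) h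
    · exact h
  refine ⟨hdiff, hne, hinjl, hopen _ subset_rfl isOpen_ball, ?_⟩
  have hemb : Topology.IsOpenEmbedding ((ball (0:ℂ) 1).domRestrict Φlim) := by
    refine .of_continuous_injective_isOpenMap hdiff.continuousOn.domRestrict
      (injOn_iff_injective.1 hinjl) ?_
    intro U hU
    have : (ball (0:ℂ) 1).domRestrict Φlim '' U = Φlim '' (Subtype.val '' U) := by
      rw [image_image]; rfl
    rw [this]
    exact hopen _ (by rintro _ ⟨x, _, rfl⟩; exact x.2) (isOpen_ball.isOpenMap_subtype_val U hU)
  rw [← range_domRestrict]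
  have : ContractibleSpace (ball (0:ℂ) 1) :=
    (convex_ball (0:ℂ) 1).contractibleSpace ⟨0, mem_ball_self one_pos⟩
  have : ContractibleSpace (range ((ball (0:ℂ) 1).domRestrict Φlim)) :=
    hemb.toIsEmbedding.toHomeomorph.symm.contractibleSpace
  exact SimplyConnectedSpace.ofContractible _
end

section
/- Let {Ω_n} (n ≥ 1) be a sequence of bounded, simply connected open subsets of ℂ, each containing 0 and each symmetric in the following sense: 0 ∈ Ω_n, Ω_n is invariant under complex conjugation, and for every r > 0 the set ∂B(0,r) \ Ω_n is either empty or a connected closed set containing a point on the positive real axis. For each n let Φ_n : 𝔻 → Ω_n be a holomorphic bijection with Φ_n(0) = 0 and Φ_n'(0) > 0, and suppose Φ_n → Φ uniformly on 𝔻, where Φ is a holomorphic bijection from 𝔻 onto some open simply connected set Ω ⊆ ℂ. Then Ω is symmetric in the same sense: 0 ∈ Ω, Ω is invariant under complex conjugation, and for every r > 0 the set ∂B(0,r) \ Ω is either empty or a connected closed set containing a point on the positive real axis. -/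
open Complex Metric Set

/-- A domain `Ω ⊆ ℂ` is symmetric: `0 ∈ Ω`, `Ω` is invariant under complex conjugation,
and for every `r > 0` the set `∂B(0,r) \ Ω` is either empty or a connected closed set
containing a point on the positive real axis. -/
def SymmetricDomain (Ω : Set ℂ) : Prop :=
  (0:ℂ) ∈ Ω ∧ (∀ z : ℂ, z ∈ Ω ↔ (starRingEnd ℂ) z ∈ Ω) ∧
  ∀ r : ℝ, 0 < r →
    (Metric.sphere (0:ℂ) r \ Ω = ∅ ∨
      (IsClosed (Metric.sphere (0:ℂ) r \ Ω) ∧ IsConnected (Metric.sphere (0:ℂ) r \ Ω) ∧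
        ∃ x : ℝ, 0 < x ∧ (x:ℂ) ∈ Metric.sphere (0:ℂ) r \ Ω))

lemma lemA {F G : ℂ → ℂ} (hF : DifferentiableOn ℂ F (ball (0:ℂ) 1))
    (hG : DifferentiableOn ℂ G (ball (0:ℂ) 1)) (hinj : Set.InjOn F (ball (0:ℂ) 1))
    {w : ℂ} {ε : ℝ} (hε : 0 < ε) (hsub : closedBall w ε ⊆ F '' ball (0:ℂ) 1)
    (hFG : ∀ z ∈ ball (0:ℂ) 1, dist (F z) (G z) ≤ ε / 4) : w ∈ G '' ball (0:ℂ) 1 := by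
  by_contra hw
  have hne : ∀ z ∈ ball (0:ℂ) 1, G z - w ≠ 0 := fun z hz h => hw ⟨z, hz, sub_eq_zero.1 h⟩
  -- open embedding
  have hemb : Topology.IsOpenEmbedding (fun z : ball (0:ℂ) 1 => F z) := by
    refine Topology.IsOpenEmbedding.of_continuous_injective_isOpenMap
      (continuousOn_iff_continuous_domRestrict.1 hF.continuousOn)
      (fun a b h => Subtype.ext (hinj a.2 b.2 h)) ?_
    intro s hs
    have hs' : IsOpen (Subtype.val '' s) := isOpen_ball.isOpenMap_subtype_val s hs
    have hsD : Subtype.val '' s ⊆ ball (0:ℂ) 1 := by rintro _ ⟨x, _, rfl⟩; exact x.2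
    have := (hF.analyticOnNhd isOpen_ball).is_constant_or_isOpen
      (convex_ball (0:ℂ) 1).isPreconnected
    rcases this with ⟨c, hc⟩ | h
    · exfalso
      have h0 : (0:ℂ) ∈ ball (0:ℂ) 1 := by simp
      have h1 : (1/2:ℂ) ∈ ball (0:ℂ) 1 := by simp; norm_num
      have := hinj h0 h1 (by rw [hc _ h0, hc _ h1])
      norm_num at this
    · have := h _ hsD hs'
      rwa [Set.image_image] at this
  have hK : IsCompact (Subtype.val '' ((fun z : ball (0:ℂ) 1 => F z) ⁻¹' closedBall w ε)) := by
    refine IsCompact.image ?_ continuous_subtype_val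
    refine hemb.isInducing.isCompact_preimage' (isCompact_closedBall w ε) ?_
    intro x hx
    obtain ⟨z, hz, rfl⟩ := hsub hx
    exact ⟨⟨z, hz⟩, rfl⟩
  set K := Subtype.val '' ((fun z : ball (0:ℂ) 1 => F z) ⁻¹' closedBall w ε) with hKdef
  have hKm : ∀ z, z ∈ K ↔ z ∈ ball (0:ℂ) 1 ∧ F z ∈ closedBall w ε := by
    intro z
    constructor
    · rintro ⟨x, hx, rfl⟩; exact ⟨x.2, hx⟩
    · rintro ⟨h1, h2⟩; exact ⟨⟨z, h1⟩, h2, rfl⟩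
  set U := ball (0:ℂ) 1 ∩ F ⁻¹' ball w ε with hU
  have hUo : IsOpen U := hF.continuousOn.isOpen_inter_preimage isOpen_ball isOpen_ball
  have hUK : U ⊆ K := fun z hz => (hKm z).2 ⟨hz.1, ball_subset_closedBall hz.2⟩
  have hcl : closure U ⊆ K := closure_minimal hUK hK.isClosed
  have hclD : closure U ⊆ ball (0:ℂ) 1 := fun z hz => ((hKm z).1 (hcl hz)).1
  obtain ⟨z₀, hz₀, hFz₀⟩ := hsub (mem_closedBall_self hε.le)
  have hz₀U : z₀ ∈ U := ⟨hz₀, by simp [hFz₀, hε]⟩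
  have hd : DifferentiableOn ℂ (fun z => (G z - w)⁻¹) (ball (0:ℂ) 1) :=
    (hG.sub_const w).inv hne
  have key := Complex.norm_le_of_forall_mem_frontier_norm_le (f := fun z => (G z - w)⁻¹)
    (U := U) (C := (3 * ε / 4)⁻¹) (isBounded_ball.subset (inter_subset_left))
    ((hd.mono hclD).diffContOnCl) ?_ (subset_closure hz₀U)
  · have h1 := hFG z₀ hz₀
    have h2 : 0 < ‖G z₀ - w‖ := norm_pos_iff.2 (hne z₀ hz₀)
    rw [hFz₀, dist_comm, dist_eq_norm] at h1
    simp only [norm_inv] at key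
    rw [inv_le_inv₀ h2 (by positivity)] at key
    linarith
  · intro z hz
    have hzc := frontier_subset_closure hz
    have hzU : z ∉ U := by
      rw [hUo.frontier_eq] at hz; exact hz.2
    have hzD := hclD hzc
    have h3 : ε ≤ dist (F z) w := by
      by_contra h; exact hzU ⟨hzD, by simpa using h⟩
    have h4 := hFG z hzD
    have h5 := dist_triangle (F z) (G z) w
    rw [dist_eq_norm (G z)] at h5
    simp only [norm_inv]
    apply inv_anti₀ (by positivity)
    linarith

lemma re_norm_eq {u v : ℂ} (h : ‖u‖ = ‖v‖) (hre : u.re = v.re) :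
    u = v ∨ u = (starRingEnd ℂ) v := by
  have h1 : ‖u‖ ^ 2 = ‖v‖ ^ 2 := by rw [h]
  rw [← Complex.normSq_eq_norm_sq, ← Complex.normSq_eq_norm_sq, Complex.normSq_apply,
    Complex.normSq_apply, hre] at h1
  have h2 : u.im = v.im ∨ u.im = -v.im := by
    apply sq_eq_sq_iff_eq_or_eq_neg.1; nlinarith
  rcases h2 with h2 | h2
  · left; exact Complex.ext hre h2
  · right; exact Complex.ext (by simpa using hre) (by simpa using h2)

/-- Complement is upward closed in the real part on each circle. -/
lemma symm_up {Ω : Set ℂ} (h : SymmetricDomain Ω) {v v' : ℂ} (hv : v ∉ Ω)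
    (hn : ‖v'‖ = ‖v‖) (hre : v.re ≤ v'.re) : v' ∉ Ω := by
  obtain ⟨h0, hc, hr⟩ := h
  have hv0 : v ≠ 0 := by rintro rfl; exact hv h0
  have hpos : 0 < ‖v‖ := norm_pos_iff.2 hv0
  have hvm : v ∈ sphere (0:ℂ) ‖v‖ \ Ω := ⟨by simp, hv⟩
  rcases hr ‖v‖ hpos with he | ⟨-, hcon, x, hx, hxm⟩
  · rw [he] at hvm; exact absurd hvm (by simp)
  · have hx' : x = ‖v‖ := by
      have := hxm.1
      simpa [abs_of_pos hx] using this
    have hle : v'.re ≤ ((x:ℂ)).re := by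
      rw [Complex.ofReal_re, hx', ← hn]; exact Complex.re_le_norm v'
    obtain ⟨u, hu, hur⟩ := hcon.isPreconnected.intermediate_value hvm hxm
      Complex.continuous_re.continuousOn ⟨hre, hle⟩
    have hun : ‖u‖ = ‖v'‖ := by
      have := hu.1; rw [hn]; simpa using this
    rcases re_norm_eq hun hur with e | e
    · rw [← e]; exact hu.2
    · rw [hc, ← e]; exact hu.2

lemma arcs {Ω : Set ℂ} {r : ℝ} (hr : 0 < r)
    (hup : ∀ v v' : ℂ, v ∉ Ω → ‖v'‖ = ‖v‖ → v.re ≤ v'.re → v' ∉ Ω) :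
    IsPreconnected (sphere (0:ℂ) r \ Ω) := by
  refine isPreconnected_of_forall (r : ℂ) ?_
  rintro y ⟨hy, hyΩ⟩
  have hyn : ‖y‖ = r := by simpa using hy
  have hyr : y.re = r * Real.cos |y.arg| := by
    rw [Real.cos_abs, ← hyn, Complex.norm_mul_cos_arg]
  refine ⟨(fun t : ℝ => (r : ℂ) * Complex.exp (t * I)) '' Icc (-|y.arg|) |y.arg|, ?_, ?_, ?_, ?_⟩
  · rintro _ ⟨t, ht, rfl⟩
    have hnorm : ‖(r : ℂ) * Complex.exp (t * I)‖ = r := by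
      rw [norm_mul, Complex.norm_exp_ofReal_mul_I]; simp [abs_of_pos hr]
    refine ⟨by simpa using hnorm, hup y _ hyΩ (by rw [hyn]; exact hnorm) ?_⟩
    have : ((r : ℂ) * Complex.exp (t * I)).re = r * Real.cos |t| := by
      rw [Complex.re_ofReal_mul, Complex.exp_ofReal_mul_I_re, Real.cos_abs]
    simp only [this, hyr]
    refine mul_le_mul_of_nonneg_left ?_ hr.le
    exact Real.cos_le_cos_of_nonneg_of_le_pi (abs_nonneg _) (Complex.abs_arg_le_pi y)
      (abs_le.2 ht)
  · exact ⟨0, ⟨by simp, by simp⟩, by simp⟩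
  · refine ⟨y.arg, abs_le.1 le_rfl, ?_⟩
    simp only
    rw [← hyn]; exact Complex.norm_mul_exp_arg_mul_I y
  · exact isPreconnected_Icc.image _ (by fun_prop)

theorem stmt2 (Ω : ℕ → Set ℂ) (Φ : ℕ → ℂ → ℂ) (Φlim : ℂ → ℂ) (Ωlim : Set ℂ)
    (hbdd : ∀ n, Bornology.IsBounded (Ω n))
    (hopen : ∀ n, IsOpen (Ω n))
    (hsc : ∀ n, SimplyConnectedSpace (Ω n))
    (hzero : ∀ n, (0:ℂ) ∈ Ω n)
    (hsymm : ∀ n, SymmetricDomain (Ω n))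
    (hΦhol : ∀ n, DifferentiableOn ℂ (Φ n) (ball (0:ℂ) 1))
    (hΦbij : ∀ n, Set.BijOn (Φ n) (ball (0:ℂ) 1) (Ω n))
    (hΦ0 : ∀ n, Φ n 0 = 0)
    (hΦ' : ∀ n, ∃ c : ℝ, 0 < c ∧ deriv (Φ n) 0 = (c : ℂ))
    (hconv : TendstoUniformlyOn Φ Φlim Filter.atTop (ball (0:ℂ) 1))
    (hlimhol : DifferentiableOn ℂ Φlim (ball (0:ℂ) 1))
    (hlimbij : Set.BijOn Φlim (ball (0:ℂ) 1) Ωlim)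
    (hlimopen : IsOpen Ωlim)
    (hlimsc : SimplyConnectedSpace Ωlim) :
    SymmetricDomain Ωlim := by
  have hD0 : (0:ℂ) ∈ ball (0:ℂ) 1 := by simp
  have hlim0 : Φlim 0 = 0 := by
    have h := hconv.tendsto_at hD0
    simp only [hΦ0] at h
    exact (tendsto_nhds_unique h tendsto_const_nhds)
  have h0 : (0:ℂ) ∈ Ωlim := by rw [← hlim0]; exact hlimbij.mapsTo hD0
  -- approximation
  have happ : ∀ ε : ℝ, 0 < ε → ∃ n,
      (∀ w, closedBall w ε ⊆ Ωlim → w ∈ Ω n) ∧ (∀ w, closedBall w ε ⊆ Ω n → w ∈ Ωlim) := by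
    intro ε hε
    obtain ⟨n, hn⟩ := (Metric.tendstoUniformlyOn_iff.1 hconv (ε / 4) (by positivity)).exists
    refine ⟨n, fun w hw => ?_, fun w hw => ?_⟩
    · rw [← (hΦbij n).image_eq]
      rw [← hlimbij.image_eq] at hw
      exact lemA hlimhol (hΦhol n) hlimbij.injOn hε hw (fun z hz => (hn z hz).le)
    · rw [← hlimbij.image_eq]
      rw [← (hΦbij n).image_eq] at hw
      exact lemA (hΦhol n) hlimhol (hΦbij n).injOn hε hw
        (fun z hz => by rw [dist_comm]; exact (hn z hz).le)
  have hball : ∀ w ∈ Ωlim, ∃ δ : ℝ, 0 < δ ∧ ∀ ε ≤ δ, ∀ v ∈ closedBall w ε,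
      closedBall v ε ⊆ Ωlim := by
    intro w hw
    obtain ⟨ρ, hρ, hsub⟩ := Metric.isOpen_iff.1 hlimopen w hw
    refine ⟨ρ / 3, by positivity, fun ε hε v hv x hx => hsub ?_⟩
    have := dist_triangle x v w
    simp only [mem_closedBall, mem_ball] at *
    linarith
  have hconj1 : ∀ w ∈ Ωlim, (starRingEnd ℂ) w ∈ Ωlim := by
    intro w hw
    obtain ⟨δ, hδ, hd⟩ := hball w hw
    obtain ⟨n, hn1, hn2⟩ := happ δ hδ
    refine hn2 _ fun x hx => ?_
    rw [(hsymm n).2.1]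
    refine hn1 _ (hd δ le_rfl _ ?_)
    rw [mem_closedBall] at *
    rwa [← Complex.dist_conj_conj, Complex.conj_conj]
  have hconj : ∀ w, w ∈ Ωlim ↔ (starRingEnd ℂ) w ∈ Ωlim := fun w =>
    ⟨hconj1 w, fun h => by simpa using hconj1 _ h⟩
  have hup : ∀ v v' : ℂ, v ∉ Ωlim → ‖v'‖ = ‖v‖ → v.re ≤ v'.re → v' ∉ Ωlim := by
    intro w w' hw hnorm hre hw'
    rcases hre.eq_or_lt with heq | hlt
    · rcases re_norm_eq hnorm heq.symm with e | e
      · exact hw (e ▸ hw')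
      · rw [e] at hw'; exact hw ((hconj w).2 hw')
    have hw0 : w ≠ 0 := by rintro rfl; exact hw h0
    have hpos : 0 < ‖w‖ := norm_pos_iff.2 hw0
    obtain ⟨δ, hδ, hd⟩ := hball w' hw'
    set ε := min δ ((w'.re - w.re) / 2) with hεdef
    have hε : 0 < ε := lt_min hδ (by linarith)
    have hε2 : ε ≤ (w'.re - w.re) / 2 := min_le_right _ _
    obtain ⟨n, hn1, hn2⟩ := happ ε hε
    have : ¬ closedBall w ε ⊆ Ω n := fun h => hw (hn2 w h)
    obtain ⟨v, hv, hvn⟩ := Set.not_subset.1 this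
    rw [mem_closedBall, dist_eq_norm] at hv
    set v' : ℂ := ((‖v‖ / ‖w‖ : ℝ) : ℂ) * w' with hv'
    have hv'n : ‖v'‖ = ‖v‖ := by
      rw [hv', norm_mul, hnorm, Complex.norm_real, Real.norm_of_nonneg (by positivity)]
      field_simp
    have hdist : ‖v' - w'‖ ≤ ε := by
      have : v' - w' = ((‖v‖ / ‖w‖ - 1 : ℝ) : ℂ) * w' := by rw [hv']; push_cast; ring
      rw [this, norm_mul, hnorm, Complex.norm_real, Real.norm_eq_abs]
      have : |‖v‖ / ‖w‖ - 1| * ‖w‖ = |‖v‖ - ‖w‖| := by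
        rw [← abs_of_pos hpos, ← abs_mul, abs_of_pos hpos]; congr 1; field_simp
      rw [this]
      exact (abs_norm_sub_norm_le v w).trans hv
    have hr1 : |v'.re - w'.re| ≤ ε := by
      have := Complex.abs_re_le_norm (v' - w'); rw [Complex.sub_re] at this; linarith
    have hr2 : |v.re - w.re| ≤ ε := by
      have := Complex.abs_re_le_norm (v - w); rw [Complex.sub_re] at this; linarith
    rw [abs_le] at hr1 hr2
    refine symm_up (hsymm n) hvn hv'n (by linarith) (hn1 v' (hd ε (min_le_left _ _) v' ?_))
    rw [mem_closedBall, dist_eq_norm]; exact hdist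
  refine ⟨h0, hconj, fun r hr => ?_⟩
  rcases Set.eq_empty_or_nonempty (sphere (0:ℂ) r \ Ωlim) with he | ⟨y, hy⟩
  · exact Or.inl he
  · refine Or.inr ⟨isClosed_sphere.sdiff hlimopen, ⟨⟨y, hy⟩, arcs hr hup⟩, r, hr, ?_⟩
    have hyn : ‖y‖ = r := by simpa using hy.1
    refine ⟨by simp [abs_of_pos hr], hup y _ hy.2 (by simp [abs_of_pos hr, hyn]) ?_⟩
    rw [Complex.ofReal_re, ← hyn]; exact Complex.re_le_norm y
end

section
/- Let Ω ⊆ ℂ be an open, simply connected set and let r > 0. Suppose that the two open sets Ω ∩ B(0,r) and Ω \ closure(B(0,r)) are both path-connected. Then the set Ω ∩ ∂B(0,r) is path-connected; moreover, any two points z, w ∈ Ω ∩ ∂B(0,r) can be joined by an arc of the circle ∂B(0,r) that is contained in Ω. -/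
open Complex Metric Set

theorem int_const {X : Type*} [TopologicalSpace X] {S : Set X} (hS : IsPreconnected S)
    {f : X → ℝ} (hf : ContinuousOn f S) (hi : ∀ x ∈ S, ((f x : ℝ) : AddCircle (1:ℝ)) = 0)
    {x y : X} (hx : x ∈ S) (hy : y ∈ S) : f x = f y := by
  have hd : IsDiscrete (range ((↑) : ℤ → ℝ)) := by
    have : DiscreteTopology (range ((↑) : ℤ → ℝ)) :=
      Int.isClosedEmbedding_coe_real.isEmbedding.toHomeomorph.symm.isEmbedding.discreteTopology
    exact ⟨this⟩
  refine hS.constant_of_mapsTo hd hf (fun z hz => ?_) hx hy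
  obtain ⟨n, hn⟩ := (AddCircle.coe_eq_zero_iff (1:ℝ)).1 (hi z hz)
  exact ⟨n, by simpa using hn⟩

theorem sphere_pathConn (Ω : Set ℂ) (r : ℝ) (hr : 0 < r) (hopen : IsOpen Ω)
    (h : IsConnected (Ω ∩ sphere (0:ℂ) r)) : IsPathConnected (Ω ∩ sphere (0:ℂ) r) := by
  let φ : Circle → ℂ := fun x => r * x
  have hφ : Continuous φ := by fun_prop
  have hinj : Function.Injective φ := by
    intro x y hxy
    have : (r:ℂ) ≠ 0 := by exact_mod_cast hr.ne'
    exact Subtype.ext (mul_left_cancel₀ this hxy)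
  have hemb : Topology.IsClosedEmbedding φ := hφ.isClosedEmbedding hinj
  have him : φ '' (φ ⁻¹' Ω) = Ω ∩ sphere (0:ℂ) r := by
    rw [image_preimage_eq_inter_range]
    congr 1
    ext z
    simp only [mem_range, mem_sphere_zero_iff_norm]
    constructor
    · rintro ⟨x, rfl⟩
      simp [φ, abs_of_pos hr, Circle.norm_coe]
    · intro hz
      refine ⟨⟨z / r, ?_⟩, ?_⟩
      · simp [Submonoid.unitSphere, hz, abs_of_pos hr, hr.ne']
      · have : (r:ℂ) ≠ 0 := by exact_mod_cast hr.ne'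
        simp only [φ]
        field_simp
  have : LocallyPathConnectedSpace (AddCircle (2 * Real.pi)) :=
    Quotient.locallyPathConnectedSpace
  have : LocallyPathConnectedSpace Circle :=
    (AddCircle.homeomorphCircle'.symm).isOpenEmbedding.locallyPathConnectedSpace
  have hc : IsConnected (φ ⁻¹' Ω) := by
    rw [← him] at h
    refine ⟨h.1.of_image, (hemb.isInducing.isPreconnected_image).1 h.2⟩
  have := (IsOpen.isConnected_iff_isPathConnected (hopen.preimage hφ)).1 hc
  rw [← him]
  exact this.image hφ

theorem ext_closure (Ω : Set ℂ) (r : ℝ) (hr : 0 < r) (hopen : IsOpen Ω) :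
    Ω \ ball (0:ℂ) r ⊆ closure (Ω \ closedBall (0:ℂ) r) := by
  have h : (ball (0:ℂ) r)ᶜ = closure (closedBall (0:ℂ) r)ᶜ := by
    rw [closure_compl, interior_closedBall _ hr.ne']
  rw [sdiff_eq, sdiff_eq, h]
  exact hopen.inter_closure

theorem int_closure (Ω : Set ℂ) (r : ℝ) (hr : 0 < r) (hopen : IsOpen Ω) :
    Ω ∩ closedBall (0:ℂ) r ⊆ closure (Ω ∩ ball (0:ℂ) r) := by
  rw [← closure_ball _ hr.ne']
  exact hopen.inter_closure

theorem stmt3 (Ω : Set ℂ) (r : ℝ) (hr : 0 < r)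
    (hopen : IsOpen Ω) (hsc : SimplyConnectedSpace Ω)
    (h1 : IsPathConnected (Ω ∩ ball (0:ℂ) r))
    (h2 : IsPathConnected (Ω \ closedBall (0:ℂ) r)) :
    IsPathConnected (Ω ∩ sphere (0:ℂ) r) ∧
    ∀ z ∈ Ω ∩ sphere (0:ℂ) r, ∀ w ∈ Ω ∩ sphere (0:ℂ) r,
      ∃ A : Set ℂ, A ⊆ sphere (0:ℂ) r ∧ A ⊆ Ω ∧ IsConnected A ∧ z ∈ A ∧ w ∈ A := by
  have hΩ : IsPreconnected Ω := isPreconnected_iff_preconnectedSpace.2 inferInstance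
  suffices hc : IsConnected (Ω ∩ sphere (0:ℂ) r) by
    refine ⟨sphere_pathConn Ω r hr hopen hc, fun z hz w hw => ?_⟩
    exact ⟨_, inter_subset_right, inter_subset_left, hc, hz, hw⟩
  constructor
  · by_contra hne
    rw [not_nonempty_iff_eq_empty] at hne
    obtain ⟨x, hx, hxu⟩ := h1.nonempty
    obtain ⟨y, hy, hyu⟩ := h2.nonempty
    obtain ⟨z, hz, hz1, hz2⟩ := hΩ (ball 0 r) (closedBall 0 r)ᶜ isOpen_ball
      isClosed_closedBall.isOpen_compl (fun z hz => by
        by_contra hcon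
        have : z ∈ Ω ∩ sphere (0:ℂ) r := by
          refine ⟨hz, ?_⟩
          simp at hcon ⊢
          linarith
        simp [hne] at this) ⟨x, hx, hxu⟩ ⟨y, hy, hyu⟩
    exact hz2 (ball_subset_closedBall hz1)
  -- preconnected pieces
  have hE : IsPreconnected (Ω \ ball (0:ℂ) r) :=
    h2.isConnected.2.subset_closure (sdiff_subset_sdiff_right ball_subset_closedBall)
      (ext_closure Ω r hr hopen)
  have hI : IsPreconnected (Ω ∩ closedBall (0:ℂ) r) :=
    h1.isConnected.2.subset_closure (inter_subset_inter_right _ ball_subset_closedBall)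
      (int_closure Ω r hr hopen)
  have hE' : IsPreconnected {x : Ω | r ≤ ‖(x:ℂ)‖} := by
    rw [← Topology.IsInducing.subtypeVal.isPreconnected_image]
    convert hE using 1
    ext z; simp [and_comm]
  have hI' : IsPreconnected {x : Ω | ‖(x:ℂ)‖ ≤ r} := by
    rw [← Topology.IsInducing.subtypeVal.isPreconnected_image]
    convert hI using 1
    ext z; simp [and_comm]
  rintro U V hU hV hUV ⟨a, ha, haU⟩ ⟨b, hb, hbV⟩
  by_contra hemp
  set K₁ := Ω ∩ sphere (0:ℂ) r ∩ U with hK₁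
  set K₂ := Ω ∩ sphere (0:ℂ) r ∩ V with hK₂
  have hn₁ : K₁.Nonempty := ⟨a, ha, haU⟩
  have hn₂ : K₂.Nonempty := ⟨b, hb, hbV⟩
  have hUK : ∀ z ∈ U, z ∉ closure K₂ := by
    intro z hz hzc
    obtain ⟨y, hy, hy2⟩ := mem_closure_iff.1 hzc U hU hz
    exact hemp ⟨y, hy2.1, hy, hy2.2⟩
  have hVK : ∀ z ∈ V, z ∉ closure K₁ := by
    intro z hz hzc
    obtain ⟨y, hy, hy2⟩ := mem_closure_iff.1 hzc V hV hz
    exact hemp ⟨y, hy2.1, hy2.2, hy⟩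
  have hcS : closure K₁ ⊆ sphere (0:ℂ) r :=
    closure_minimal (fun z hz => hz.1.2) isClosed_sphere
  have hden : ∀ x : Ω, infDist (x:ℂ) K₁ + infDist (x:ℂ) K₂ ≠ 0 := by
    intro x hx
    have e1 : infDist (x:ℂ) K₁ = 0 := by
      linarith [infDist_nonneg (x := (x:ℂ)) (s := K₁), infDist_nonneg (x := (x:ℂ)) (s := K₂)]
    have e2 : infDist (x:ℂ) K₂ = 0 := by linarith
    rw [← mem_closure_iff_infDist_zero hn₁] at e1
    rw [← mem_closure_iff_infDist_zero hn₂] at e2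
    rcases hUV ⟨x.2, hcS e1⟩ with h | h
    · exact hUK _ h e2
    · exact hVK _ h e1
  let g : Ω → ℝ := fun x => infDist (x:ℂ) K₁ / (infDist (x:ℂ) K₁ + infDist (x:ℂ) K₂)
  have hg : Continuous g := by
    have c1 : Continuous fun x : Ω => infDist (x:ℂ) K₁ :=
      (continuous_infDist_pt K₁).comp continuous_subtype_val
    have c2 : Continuous fun x : Ω => infDist (x:ℂ) K₂ :=
      (continuous_infDist_pt K₂).comp continuous_subtype_val
    exact c1.div (c1.add c2) hden
  have hg1 : ∀ x : Ω, (x:ℂ) ∈ K₁ → g x = 0 := by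
    intro x hx
    simp [g, infDist_zero_of_mem hx]
  have hg2 : ∀ x : Ω, (x:ℂ) ∈ K₂ → g x = 1 := by
    intro x hx
    have := hden x
    simp only [g]
    simp only [infDist_zero_of_mem hx, add_zero] at this ⊢
    exact div_self this
  let f : C(Ω, AddCircle (1:ℝ)) :=
    { toFun := fun x => if ‖(x:ℂ)‖ ≤ r then ((g x : ℝ) : AddCircle (1:ℝ)) else 0
      continuous_toFun := by
        refine Continuous.if_le ((AddCircle.continuous_mk' (1:ℝ)).comp hg) continuous_const
          (by fun_prop) continuous_const ?_
        intro x hx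
        have hxs : (x:ℂ) ∈ Ω ∩ sphere (0:ℂ) r := ⟨x.2, by simpa using hx⟩
        rcases hUV hxs with h | h
        · simp [hg1 x ⟨hxs, h⟩]
        · simp [hg2 x ⟨hxs, h⟩] }
  have : LocallyPathConnectedSpace Ω := hopen.locallyPathConnectedSpace
  let a' : Ω := ⟨a, ha.1⟩
  let b' : Ω := ⟨b, hb.1⟩
  have nA : ‖(a':ℂ)‖ = r := by simpa using ha.2
  have nB : ‖(b':ℂ)‖ = r := by simpa using hb.2
  have gA : g a' = 0 := hg1 a' ⟨ha, haU⟩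
  have gB : g b' = 1 := hg2 b' ⟨hb, hbV⟩
  obtain ⟨F, ⟨-, hF⟩, -⟩ := (AddCircle.isCoveringMap_coe (1:ℝ)).existsUnique_continuousMap_lifts
    f a' 0 (by simp [f, nA, gA])
  have hF' : ∀ x, ((F x : ℝ) : AddCircle (1:ℝ)) = f x := fun x => congr_fun hF x
  have k1 : F a' = F b' := by
    refine int_const hE' F.continuous.continuousOn ?_ nA.ge nB.ge
    intro x hx
    rw [hF']
    rcases (show r ≤ ‖(x:ℂ)‖ from hx).eq_or_lt with h | h
    · have hxs : (x:ℂ) ∈ Ω ∩ sphere (0:ℂ) r := ⟨x.2, by simpa using h.symm⟩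
      rcases hUV hxs with h' | h'
      · simp [f, hg1 x ⟨hxs, h'⟩]
      · simp [f, hg2 x ⟨hxs, h'⟩]
    · simp [f, not_le.2 h]
  have k2 : F a' - g a' = F b' - g b' := by
    refine int_const (f := fun x => F x - g x) hI' (F.continuous.sub hg).continuousOn ?_
      nA.le nB.le
    intro x hx
    have hx' : ‖(x:ℂ)‖ ≤ r := hx
    rw [AddCircle.coe_sub, hF']
    simp [f, hx']
  rw [gA, gB] at k2
  linarith
end

section
/- Let Ω ⊆ ℂ be a bounded, simply connected open set that is symmetric in the following sense: 0 ∈ Ω, Ω is invariant under complex conjugation, and for every r > 0 the set ∂B(0,r) \ Ω is either empty or a connected closed set containing a point on the positive real axis. Let μ and M be the largest and smallest positive numbers, respectively, such that B(0,μ) ⊆ Ω ⊆ B(0,M). Let Φ : 𝔻 → Ω be a holomorphic bijection with Φ(0) = 0 and Φ'(0) > 0. Then Φ(conj(z)) = conj(Φ(z)) for all z ∈ 𝔻; Φ(z) is real if and only if z is real; Φ maps the interval (−1,0) onto (−M,0); and Φ maps the interval (0,1) onto (0,μ). -/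
open Complex Metric Set

open Filter Topology in
theorem inv_diff (Ω : Set ℂ) (hopen : IsOpen Ω) (Φ g : ℂ → ℂ)
    (hΦhol : DifferentiableOn ℂ Φ (ball (0:ℂ) 1))
    (hg : Set.InvOn g Φ (ball (0:ℂ) 1) Ω)
    (hgm : Set.MapsTo g Ω (ball (0:ℂ) 1))
    (hd : deriv Φ 0 ≠ 0) : DifferentiableOn ℂ g Ω := by
  have hb : IsOpen (ball (0:ℂ) 1) := isOpen_ball
  have han : AnalyticOnNhd ℂ Φ (ball (0:ℂ) 1) := hΦhol.analyticOnNhd hb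
  have hcont : ∀ w ∈ Ω, ContinuousAt g w := by
    intro w hw
    have hz := hgm hw
    have hzn : ball (0:ℂ) 1 ∈ 𝓝 (g w) := hb.mem_nhds hz
    have hle : 𝓝 (Φ (g w)) ≤ map Φ (𝓝 (g w)) := by
      refine (han _ hz).eventually_constant_or_nhds_le_map_nhds.resolve_left ?_
      intro hc
      have hc2 : ∀ᶠ z in 𝓝 (g w), z = g w := by
        filter_upwards [hc, hzn] with z h1 h2
        exact hg.1.injOn h2 hz h1
      have : ∃ᶠ z in 𝓝[≠] (g w), False := by
        have h3 : ∀ᶠ z in 𝓝[≠] (g w), False := by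
          filter_upwards [hc2.filter_mono nhdsWithin_le_nhds, self_mem_nhdsWithin] with z h1 h2
          exact h2 h1
        exact h3.frequently
      simp at this
    rw [hg.2 hw] at hle
    have : Tendsto g (map Φ (𝓝 (g w))) (𝓝 (g w)) := by
      rw [tendsto_map'_iff]
      refine tendsto_id.congr' ?_
      filter_upwards [hzn] with z hz2
      exact (hg.1 hz2).symm
    exact this.mono_left hle
  intro w hw
  apply DifferentiableAt.differentiableWithinAt
  apply AnalyticAt.differentiableAt
  refine Complex.analyticAt_of_differentiable_on_punctured_nhds_of_continuousAt ?_ (hcont w hw)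
  have hz := hgm hw
  have hne : ∀ᶠ z in 𝓝[≠] (g w), deriv Φ z ≠ 0 := by
    by_contra hcon
    have hf : ∃ᶠ z in 𝓝[≠] (g w), deriv Φ z = 0 := by
      exact hcon
    exact hd (han.deriv.eqOn_zero_of_preconnected_of_frequently_eq_zero
      (convex_ball (0:ℂ) 1).isPreconnected hz hf (by simp))
  have hΩn : ∀ᶠ y in 𝓝 w, y ∈ Ω := hopen.mem_nhds hw
  have ht : Tendsto g (𝓝[≠] w) (𝓝[≠] (g w)) := by
    refine tendsto_nhdsWithin_of_tendsto_nhds_of_eventually_within _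
      ((hcont w hw).tendsto.mono_left nhdsWithin_le_nhds) ?_
    filter_upwards [hΩn.filter_mono nhdsWithin_le_nhds, self_mem_nhdsWithin] with y h1 h2 h3
    exact h2 (hg.2.injOn h1 hw h3)
  filter_upwards [ht.eventually hne, hΩn.filter_mono nhdsWithin_le_nhds] with y h1 h2
  have hD : HasDerivAt Φ (deriv Φ (g y)) (g y) := (han _ (hgm h2)).differentiableAt.hasDerivAt
  refine (hD.of_local_left_inverse (hcont y h2) h1 ?_).differentiableAt
  filter_upwards [hopen.mem_nhds h2] with x hx
  exact hg.2 hx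

theorem conj_symm (Ω : Set ℂ) (hopen : IsOpen Ω)
    (hconj : ∀ z : ℂ, z ∈ Ω ↔ (starRingEnd ℂ) z ∈ Ω) (Φ : ℂ → ℂ)
    (hΦhol : DifferentiableOn ℂ Φ (ball (0:ℂ) 1))
    (hΦbij : Set.BijOn Φ (ball (0:ℂ) 1) Ω)
    (hΦ0 : Φ 0 = 0) (c : ℝ) (hc : 0 < c) (hΦ' : deriv Φ 0 = (c : ℂ)) :
    ∀ z ∈ ball (0:ℂ) 1, Φ ((starRingEnd ℂ) z) = (starRingEnd ℂ) (Φ z) := by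
  have hc' : (c:ℂ) ≠ 0 := by exact_mod_cast hc.ne'
  set g := Function.invFunOn Φ (ball (0:ℂ) 1) with hgdef
  have hg : Set.InvOn g Φ (ball (0:ℂ) 1) Ω := hΦbij.invOn_invFunOn
  have hgm : Set.MapsTo g Ω (ball (0:ℂ) 1) := hΦbij.surjOn.mapsTo_invFunOn
  have hgd : DifferentiableOn ℂ g Ω := inv_diff Ω hopen Φ g hΦhol hg hgm (by rw [hΦ']; exact hc')
  have h0b : (0:ℂ) ∈ ball (0:ℂ) 1 := by simp
  have h0 : (0:ℂ) ∈ Ω := by have := hΦbij.mapsTo h0b; rwa [hΦ0] at this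
  have hg0 : g 0 = 0 := by have := hg.1 h0b; rwa [hΦ0] at this
  have hcb : ∀ z ∈ ball (0:ℂ) 1, (starRingEnd ℂ) z ∈ ball (0:ℂ) 1 := by
    intro z hz; simpa using hz
  have hdat : ∀ z ∈ ball (0:ℂ) 1, DifferentiableAt ℂ Φ z := fun z hz =>
    hΦhol.differentiableAt (isOpen_ball.mem_nhds hz)
  set ψ : ℂ → ℂ := (starRingEnd ℂ) ∘ Φ ∘ (starRingEnd ℂ) with hψ
  have hψd : DifferentiableOn ℂ ψ (ball (0:ℂ) 1) := fun z hz =>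
    (differentiableAt_conj_conj_iff.2 (hdat _ (hcb z hz))).differentiableWithinAt
  have hψm : Set.MapsTo ψ (ball (0:ℂ) 1) Ω := fun z hz =>
    (hconj _).1 (hΦbij.mapsTo (hcb z hz))
  have hψ0 : ψ 0 = 0 := by simp [hψ, hΦ0]
  have hψ' : HasDerivAt ψ c 0 := by
    rw [hψ, hasDerivAt_conj_conj_iff]
    have := (hdat 0 h0b).hasDerivAt
    rw [hΦ'] at this
    simpa using this
  have hg' : HasDerivAt g (c:ℂ)⁻¹ 0 := by
    have h1 : HasDerivAt Φ c (g 0) := by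
      have := (hdat 0 h0b).hasDerivAt
      rwa [hΦ', ← hg0] at this
    refine h1.of_local_left_inverse (hgd.differentiableAt (hopen.mem_nhds h0)).continuousAt hc' ?_
    filter_upwards [hopen.mem_nhds h0] with x hx
    exact hg.2 hx
  have hh' : HasDerivAt (g ∘ ψ) 1 0 := by
    have h1 : HasDerivAt g (c:ℂ)⁻¹ (ψ 0) := by rwa [hψ0]
    have := h1.comp 0 hψ'
    rwa [inv_mul_cancel₀ hc'] at this
  have hhd : DifferentiableOn ℂ (g ∘ ψ) (ball (0:ℂ) 1) := hgd.comp hψd hψm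
  have hh0 : (g ∘ ψ) 0 = 0 := by simp [hψ0, hg0]
  have hhm : Set.MapsTo (g ∘ ψ) (ball (0:ℂ) 1) (closedBall ((g ∘ ψ) 0) 1) := by
    rw [hh0]; exact fun z hz => ball_subset_closedBall (hgm (hψm hz))
  have hds : dslope (g ∘ ψ) 0 0 = 1 := by rw [dslope_same]; exact hh'.deriv
  have heq := affine_of_mapsTo_ball_of_norm_dslope_eq_div hhd hhm h0b (by rw [hds]; simp)
  intro z hz
  have h1 := heq hz
  rw [hds, hh0] at h1
  simp only [zero_add, sub_zero, smul_eq_mul, mul_one] at h1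
  have h2 : Φ ((g ∘ ψ) z) = ψ z := hg.2 (hψm hz)
  rw [h1] at h2
  rw [h2]; simp [hψ]

theorem neg_mem_dom (Ω : Set ℂ) (M : ℝ) (hpre : IsPreconnected Ω) (hsymm : SymmetricDomain Ω)
    (hM : IsLeast {t : ℝ | 0 < t ∧ Ω ⊆ ball (0:ℂ) t} M) (r : ℝ) (hr : 0 < r) (hrM : r < M) :
    ((-r : ℝ) : ℂ) ∈ Ω := by
  obtain ⟨h0, hconj, hs⟩ := hsymm
  by_contra hneg
  -- the circle meets the domain
  obtain ⟨w, hw, hwr⟩ : ∃ w ∈ Ω, ‖w‖ = r := by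
    have hex : ∃ p ∈ Ω, r ≤ ‖p‖ := by
      by_contra hcon
      push Not at hcon
      have := hM.2 ⟨hr, fun p hp => by simpa using hcon p hp⟩
      linarith
    obtain ⟨p, hp, hpr⟩ := hex
    have := hpre.intermediate_value h0 hp (continuous_norm.continuousOn)
    exact this ⟨by simpa using hr.le, hpr⟩
  have hnegs : ((-r : ℝ) : ℂ) ∈ Metric.sphere (0:ℂ) r \ Ω := by
    refine ⟨?_, hneg⟩
    simp [abs_of_pos hr]
  rcases hs r hr with h | ⟨-, hcon, x, hx, hxs⟩
  · rw [h] at hnegs; exact hnegs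
  have hxr : x = r := by
    have := hxs.1
    simpa [abs_of_pos hx] using this
  subst hxr
  have hsq : ∀ z : ℂ, ‖z‖ = x → z.re ^ 2 + z.im ^ 2 = x ^ 2 := by
    intro z hz
    rw [← hz, Complex.sq_norm, Complex.normSq_apply]; ring
  have hw2 := hsq w hwr
  have hwre : |w.re| ≤ x := by rw [← hwr]; exact Complex.abs_re_le_norm w
  have hiv := hcon.isPreconnected.intermediate_value hnegs hxs
    (Complex.continuous_re.continuousOn)
  have hmem : w.re ∈ Set.Icc ((((-x : ℝ)) : ℂ).re) ((x : ℂ).re) := by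
    simp only [Complex.ofReal_re]
    exact abs_le.1 hwre
  obtain ⟨v, hv, hvw⟩ := hiv hmem
  have hv2 := hsq v (by simpa using hv.1)
  have him : v.im ^ 2 = w.im ^ 2 := by rw [hvw] at hv2; linarith
  rcases sq_eq_sq_iff_eq_or_eq_neg.1 him with h | h
  · exact hv.2 ((Complex.ext hvw h : v = w) ▸ hw)
  · have : v = (starRingEnd ℂ) w := Complex.ext (by simpa using hvw) (by simpa using h)
    exact hv.2 (this ▸ (hconj w).1 hw)

theorem mu_notMem (Ω : Set ℂ) (μ : ℝ) (hopen : IsOpen Ω) (hsymm : SymmetricDomain Ω)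
    (hμ : IsGreatest {t : ℝ | 0 < t ∧ ball (0:ℂ) t ⊆ Ω} μ) : (μ : ℂ) ∉ Ω := by
  obtain ⟨h0, hconj, hs⟩ := hsymm
  intro hmem
  obtain ⟨ε, hε, hball⟩ := Metric.isOpen_iff.1 hopen _ hmem
  have hμ0 := hμ.1.1
  have : μ + ε ≤ μ := by
    refine hμ.2 ⟨by linarith, fun z hz => ?_⟩
    by_contra hzΩ
    have hz1 : ‖z‖ < μ + ε := by simpa using hz
    have hz2 : μ ≤ ‖z‖ := by
      by_contra hlt
      exact hzΩ (hμ.1.2 (by simpa using hlt))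
    have hzs : z ∈ Metric.sphere (0:ℂ) ‖z‖ \ Ω := ⟨by simp, hzΩ⟩
    rcases hs ‖z‖ (by linarith) with h | ⟨-, -, x, hx, hxs⟩
    · rw [h] at hzs; exact hzs
    · have hxr : x = ‖z‖ := by
        have := hxs.1
        simpa [abs_of_pos hx] using this
      apply hxs.2
      apply hball
      rw [mem_ball, Complex.dist_eq, ← Complex.ofReal_sub, Complex.norm_real, Real.norm_eq_abs,
        abs_lt]
      constructor <;> linarith
  linarith

theorem stmt5 (Ω : Set ℂ) (μ M : ℝ)
    (hbdd : Bornology.IsBounded Ω) (hopen : IsOpen Ω)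
    (hsc : SimplyConnectedSpace Ω) (hsymm : SymmetricDomain Ω)
    (hμ : IsGreatest {t : ℝ | 0 < t ∧ ball (0:ℂ) t ⊆ Ω} μ)
    (hM : IsLeast {t : ℝ | 0 < t ∧ Ω ⊆ ball (0:ℂ) t} M)
    (Φ : ℂ → ℂ)
    (hΦhol : DifferentiableOn ℂ Φ (ball (0:ℂ) 1))
    (hΦbij : Set.BijOn Φ (ball (0:ℂ) 1) Ω)
    (hΦ0 : Φ 0 = 0)
    (hΦ' : ∃ c : ℝ, 0 < c ∧ deriv Φ 0 = (c : ℂ)) :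
    (∀ z ∈ ball (0:ℂ) 1, Φ ((starRingEnd ℂ) z) = (starRingEnd ℂ) (Φ z)) ∧
    (∀ z ∈ ball (0:ℂ) 1, ((Φ z).im = 0 ↔ z.im = 0)) ∧
    Φ '' ((fun x : ℝ => (x:ℂ)) '' Set.Ioo (-1 : ℝ) 0) = (fun x : ℝ => (x:ℂ)) '' Set.Ioo (-M) 0 ∧
    Φ '' ((fun x : ℝ => (x:ℂ)) '' Set.Ioo (0 : ℝ) 1) = (fun x : ℝ => (x:ℂ)) '' Set.Ioo 0 μ := by
  obtain ⟨c, hc, hΦ'⟩ := hΦ'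
  have hsy := conj_symm Ω hopen hsymm.2.1 Φ hΦhol hΦbij hΦ0 c hc hΦ'
  have hcb : ∀ z ∈ ball (0:ℂ) 1, (starRingEnd ℂ) z ∈ ball (0:ℂ) 1 := by
    intro z hz; simpa using hz
  have hreal : ∀ z ∈ ball (0:ℂ) 1, ((Φ z).im = 0 ↔ z.im = 0) := by
    intro z hz
    rw [← Complex.conj_eq_iff_im, ← Complex.conj_eq_iff_im, ← hsy z hz]
    exact ⟨fun h => hΦbij.injOn (hcb z hz) hz h, fun h => by rw [h]⟩
  refine ⟨hsy, hreal, ?_⟩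
  have hxb : ∀ x : ℝ, x ∈ Set.Ioo (-1:ℝ) 1 ↔ (x:ℂ) ∈ ball (0:ℂ) 1 := by
    intro x; simp [abs_lt]
  set f : ℝ → ℝ := fun x => (Φ x).re with hf
  have hfΦ : ∀ x ∈ Set.Ioo (-1:ℝ) 1, Φ x = (f x : ℂ) := by
    intro x hx
    have := (hreal x ((hxb x).1 hx)).2 (by simp)
    exact Complex.ext (by simp [hf]) (by simpa using this)
  have hfc : ContinuousOn f (Set.Ioo (-1:ℝ) 1) := by
    refine Complex.continuous_re.comp_continuousOn ?_
    exact hΦhol.continuousOn.comp Complex.continuous_ofReal.continuousOn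
      (fun x hx => (hxb x).1 hx)
  have hfi : Set.InjOn f (Set.Ioo (-1:ℝ) 1) := by
    intro x hx y hy hxy
    have : Φ x = Φ y := by rw [hfΦ x hx, hfΦ y hy, hxy]
    exact_mod_cast hΦbij.injOn ((hxb x).1 hx) ((hxb y).1 hy) this
  have h0I : (0:ℝ) ∈ Set.Ioo (-1:ℝ) 1 := by norm_num
  have hf0 : f 0 = 0 := by simp [hf, hΦ0]
  have hfd : HasDerivAt f c 0 := by
    have h1 : HasDerivAt Φ c ((0:ℝ):ℂ) := by
      have := (hΦhol.differentiableAt (isOpen_ball.mem_nhds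
        (by simp : (0:ℂ) ∈ ball (0:ℂ) 1))).hasDerivAt
      rw [hΦ'] at this
      simpa using this
    simpa using h1.real_of_complex
  have hmono : StrictMonoOn f (Set.Ioo (-1:ℝ) 1) := by
    rcases hfc.strictMonoOn_of_injOn_Ioo (by norm_num) hfi with h | h
    · exact h
    · exfalso
      have h1 := h.antitoneOn.derivWithin_nonpos (x := 0)
      rw [derivWithin_of_isOpen isOpen_Ioo h0I, hfd.deriv] at h1
      linarith
  have himg : ∀ t : ℝ, (t:ℂ) ∈ Ω ↔ t ∈ f '' Set.Ioo (-1:ℝ) 1 := by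
    intro t
    constructor
    · intro ht
      obtain ⟨z, hz, hzt⟩ := hΦbij.surjOn ht
      have hzi : z.im = 0 := (hreal z hz).1 (by simp [hzt])
      have hzr : z = (z.re : ℂ) := Complex.ext (by simp) (by simpa using hzi)
      refine ⟨z.re, (hxb _).2 (hzr ▸ hz), ?_⟩
      simp only [hf]
      rw [← hzr, hzt]; simp
    · rintro ⟨x, hx, rfl⟩
      rw [← hfΦ x hx]
      exact hΦbij.mapsTo ((hxb x).1 hx)
  have hord : (f '' Set.Ioo (-1:ℝ) 1).OrdConnected :=
    (isPreconnected_Ioo.image f hfc).ordConnected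
  have hpre : IsPreconnected Ω := by
    rw [← hΦbij.image_eq]
    exact (convex_ball (0:ℂ) 1).isPreconnected.image Φ hΦhol.continuousOn
  have hμn := mu_notMem Ω μ hopen hsymm hμ
  have hμ0 : 0 < μ := hμ.1.1
  have hM0 : 0 < M := hM.1.1
  have hlow : ∀ t : ℝ, (t:ℂ) ∈ Ω → -M < t := by
    intro t ht
    have := hM.1.2 ht
    rw [mem_ball_zero_iff, Complex.norm_real, Real.norm_eq_abs] at this
    exact (abs_lt.1 this).1
  have hup : ∀ t : ℝ, (t:ℂ) ∈ Ω → t < μ := by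
    intro t ht
    by_contra hcon
    push Not at hcon
    exact hμn ((himg μ).2 (hord.out ⟨0, h0I, hf0⟩ ((himg t).1 ht) ⟨hμ0.le, hcon⟩))
  have hkey : ∀ x ∈ Set.Ioo (-1:ℝ) 1, (f x : ℂ) ∈ Ω := fun x hx => (himg _).2 ⟨x, hx, rfl⟩
  constructor
  · ext w
    constructor
    · rintro ⟨_, ⟨x, hx, rfl⟩, rfl⟩
      have hxI : x ∈ Set.Ioo (-1:ℝ) 1 := ⟨hx.1, by linarith [hx.2]⟩
      refine ⟨f x, ⟨hlow _ (hkey x hxI), ?_⟩, (hfΦ x hxI).symm⟩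
      rw [← hf0]; exact hmono hxI h0I hx.2
    · rintro ⟨t, ht, rfl⟩
      have htΩ : (t:ℂ) ∈ Ω := by
        have := neg_mem_dom Ω M hpre hsymm hM (-t) (by linarith [ht.2]) (by linarith [ht.1])
        rwa [neg_neg] at this
      obtain ⟨x, hx, rfl⟩ := (himg t).1 htΩ
      have hx0 : x < 0 := (hmono.lt_iff_lt hx h0I).1 (by rw [hf0]; exact ht.2)
      exact ⟨x, ⟨x, ⟨hx.1, hx0⟩, rfl⟩, hfΦ x hx⟩
  · ext w
    constructor
    · rintro ⟨_, ⟨x, hx, rfl⟩, rfl⟩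
      have hxI : x ∈ Set.Ioo (-1:ℝ) 1 := ⟨by linarith [hx.1], hx.2⟩
      refine ⟨f x, ⟨?_, hup _ (hkey x hxI)⟩, (hfΦ x hxI).symm⟩
      rw [← hf0]; exact hmono h0I hxI hx.1
    · rintro ⟨t, ht, rfl⟩
      have htΩ : (t:ℂ) ∈ Ω := hμ.1.2 (by
        rw [mem_ball_zero_iff, Complex.norm_real, Real.norm_eq_abs, abs_of_pos ht.1]
        exact ht.2)
      obtain ⟨x, hx, rfl⟩ := (himg t).1 htΩ
      have hx0 : 0 < x := (hmono.lt_iff_lt h0I hx).1 (by rw [hf0]; exact ht.1)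
      exact ⟨x, ⟨x, ⟨hx0, hx.2⟩, rfl⟩, hfΦ x hx⟩
end

section
/- Let Ω ⊆ ℂ be a bounded, connected open set that is symmetric in the following sense: 0 ∈ Ω, Ω is invariant under complex conjugation, and for every r > 0 the set ∂B(0,r) \ Ω is either empty or a connected closed set containing a point on the positive real axis. Let μ and M be the largest and smallest positive numbers, respectively, such that B(0,μ) ⊆ Ω ⊆ B(0,M). Then μ ∉ Ω and the real interval (−M, μ) is contained in Ω. If in addition Ω is simply connected or ℂ \ Ω is simply connected, then Ω contains no point of the real interval [μ, M], i.e. Ω ∩ [μ, M] = ∅. -/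
open Complex Metric Set

/-- If a positive real point of radius `r` lies in a symmetric `Ω`, so does its whole circle. -/
theorem sphere_subset_of_mem {Ω : Set ℂ} (h : SymmetricDomain Ω) {r : ℝ} (hr : 0 < r)
    (hmem : (r : ℂ) ∈ Ω) : Metric.sphere (0:ℂ) r ⊆ Ω := by
  rcases h.2.2 r hr with h0 | ⟨-, -, x, hx, hxs, hxΩ⟩
  · exact Set.diff_eq_empty.1 h0
  · exfalso
    have : x = r := by
      simpa [abs_of_pos hx] using hxs
    exact hxΩ (this ▸ hmem)

/-- A circle in a simply connected open set cannot surround a point of the complement. -/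
theorem no_hole {Ω : Set ℂ} (hopen : IsOpen Ω) (hsc : SimplyConnectedSpace Ω) {w : ℂ} {r : ℝ}
    (hw : w ∉ Ω) (hwr : w ∈ ball (0:ℂ) r) (hs : Metric.sphere (0:ℂ) r ⊆ Ω) : False := by
  have hr : 0 < r := dist_nonneg.trans_lt hwr
  obtain ⟨f, hfc, hf⟩ := Complex.exists_continuousOn_eqOn_exp_comp (U := Ω) hsc hopen
    (g := fun z => z - w) (by fun_prop) (by
      rintro ⟨z, hz, h0⟩
      exact hw (sub_eq_zero.1 h0 ▸ hz))
  have hd : ∀ z ∈ Metric.sphere (0:ℂ) r,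
      HasDerivWithinAt f ((z - w)⁻¹) (Metric.sphere (0:ℂ) r) z := by
    intro z hz
    have hz' := hs hz
    have hfz : Complex.exp (f z) = z - w := hf hz'
    have h1 : HasDerivAt (fun u => Complex.exp u + w) (Complex.exp (f z)) (f z) :=
      (Complex.hasDerivAt_exp (f z)).add_const w
    have h2 := HasDerivAt.of_local_left_inverse (hfc.continuousAt (hopen.mem_nhds hz')) h1
      (Complex.exp_ne_zero _) (by
        filter_upwards [hopen.mem_nhds hz'] with y hy
        have : Complex.exp (f y) = y - w := hf hy
        rw [this]; ring)
    rw [hfz] at h2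
    exact h2.hasDerivWithinAt
  have h1 := circleIntegral.integral_eq_zero_of_hasDerivWithinAt hr.le hd
  rw [circleIntegral.integral_sub_inv_of_mem_ball hwr] at h1
  exact Complex.two_pi_I_ne_zero h1

theorem stmt6 (Ω : Set ℂ) (μ M : ℝ)
    (hbdd : Bornology.IsBounded Ω) (hopen : IsOpen Ω) (hconn : IsConnected Ω)
    (hsymm : SymmetricDomain Ω)
    (hμ : IsGreatest {t : ℝ | 0 < t ∧ ball (0:ℂ) t ⊆ Ω} μ)
    (hM : IsLeast {t : ℝ | 0 < t ∧ Ω ⊆ ball (0:ℂ) t} M) :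
    ((μ : ℂ) ∉ Ω) ∧
    ((fun x : ℝ => (x:ℂ)) '' Set.Ioo (-M) μ ⊆ Ω) ∧
    ((SimplyConnectedSpace Ω ∨ SimplyConnectedSpace (Ωᶜ : Set ℂ)) →
      Ω ∩ ((fun x : ℝ => (x:ℂ)) '' Set.Icc μ M) = ∅) := by
  obtain ⟨⟨hμ0, hμb⟩, hμmax⟩ := hμ
  obtain ⟨⟨hM0, hMb⟩, hMmin⟩ := hM
  have hμΩ : (μ : ℂ) ∉ Ω := by
    intro hmem
    have hs := sphere_subset_of_mem hsymm hμ0 hmem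
    have hcb : closedBall (0:ℂ) μ ⊆ Ω := by
      rw [← ball_union_sphere]
      exact Set.union_subset hμb hs
    obtain ⟨δ, hδ, hsub⟩ := (isCompact_closedBall (0:ℂ) μ).exists_thickening_subset_open hopen hcb
    rw [thickening_closedBall hδ hμ0.le] at hsub
    have := hμmax ⟨by linarith, hsub⟩
    linarith
  refine ⟨hμΩ, ?_, ?_⟩
  · rintro _ ⟨x, ⟨hx1, hx2⟩, rfl⟩
    rcases lt_or_ge (-μ) x with hx | hx
    · apply hμb
      simpa [abs_lt] using ⟨hx, hx2⟩
    obtain ⟨r, rfl⟩ : ∃ r, x = -r := ⟨-x, by ring⟩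
    have hr : 0 < r := by linarith
    have hrM : r < M := by linarith
    by_contra hneg
    -- a point of `Ω` on the circle of radius `r`
    obtain ⟨z, hz, hzr⟩ : ∃ z ∈ Ω, ‖z‖ = r := by
      obtain ⟨y, hy, hyr⟩ : ∃ y ∈ Ω, r ≤ ‖y‖ := by
        by_contra! hcon
        have := hMmin ⟨hr, fun y hy => by simpa using hcon y hy⟩
        linarith
      exact hconn.isPreconnected.intermediate_value hsymm.1 hy continuous_norm.continuousOn
        ⟨by simpa using hr.le, hyr⟩
    have hnegs : (((-r : ℝ)) : ℂ) ∈ Metric.sphere (0:ℂ) r \ Ω := ⟨by simp [abs_of_pos hr], hneg⟩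
    rcases hsymm.2.2 r hr with h0 | ⟨-, hc, x, hx, hxs⟩
    · rw [h0] at hnegs; exact hnegs
    have hxr : x = r := by simpa [abs_of_pos hx] using hxs.1
    subst hxr
    have habs := Complex.abs_re_le_norm z
    rw [hzr, abs_le] at habs
    obtain ⟨y, hy, hyz⟩ := hc.isPreconnected.intermediate_value hnegs hxs
      Complex.continuous_re.continuousOn (show z.re ∈ _ from by simpa using habs)
    have hyn : ‖y‖ = x := by simpa using hy.1
    have hyz' : y.re = z.re := hyz
    have him : y.im ^ 2 = z.im ^ 2 := by
      have h1 : y.re * y.re + y.im * y.im = z.re * z.re + z.im * z.im := by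
        rw [← Complex.normSq_apply, ← Complex.normSq_apply, Complex.normSq_eq_norm_sq,
          Complex.normSq_eq_norm_sq, hyn, hzr]
      rw [hyz'] at h1
      nlinarith
    apply hy.2
    rcases sq_eq_sq_iff_eq_or_eq_neg.1 him with h | h
    · rwa [Complex.ext hyz' h]
    · rw [hsymm.2.1]
      have : (starRingEnd ℂ) y = z := Complex.ext (by simpa using hyz') (by simp [h])
      rwa [this]
  · intro hsc
    rw [Set.eq_empty_iff_forall_notMem]
    rintro _ ⟨ht, t, ⟨ht1, ht2⟩, rfl⟩
    have hlt : μ < t := lt_of_le_of_ne ht1 (by rintro rfl; exact hμΩ ht)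
    have ht0 : 0 < t := by linarith
    have htM : t < M := by simpa [abs_of_pos ht0] using hMb ht
    have hs := sphere_subset_of_mem hsymm ht0 ht
    rcases hsc with hsc | hsc
    · exact no_hole hopen hsc hμΩ (by simpa [abs_of_pos hμ0] using hlt) hs
    · have hpc : IsPreconnected (Ωᶜ : Set ℂ) :=
        isPreconnected_iff_preconnectedSpace.2 inferInstance
      have hMΩ : (M : ℂ) ∈ Ωᶜ := fun h => by
        simpa [abs_of_pos hM0] using hMb h
      obtain ⟨y, hy, hyt⟩ := hpc.intermediate_value (show (μ : ℂ) ∈ Ωᶜ from hμΩ) hMΩ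
        continuous_norm.continuousOn
        (show t ∈ _ from by simpa [abs_of_pos hμ0, abs_of_pos hM0] using ⟨ht1, ht2⟩)
      exact hy (hs (by simpa using hyt))
end

section
/- For every real number c ≥ 0 and every θ_0 ∈ [0, π/2), the following inequality holds: ∫₀^{π/2} arctan( c / cos θ ) dθ ≤ c·log( 2 / cos θ_0 ) + (π²/4)·cos θ_0. -/
open Real

theorem stmt13 (c θ0 : ℝ) (hc : 0 ≤ c) (hθ0 : 0 ≤ θ0) (hθ0' : θ0 < π / 2) :
    ∫ θ in (0:ℝ)..(π / 2), Real.arctan (c / Real.cos θ) ≤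
      c * Real.log (2 / Real.cos θ0) + (π ^ 2 / 4) * Real.cos θ0 := by
  have hpi := Real.pi_pos
  have hint : ∀ a b : ℝ, IntervalIntegrable (fun θ => Real.arctan (c / Real.cos θ))
      MeasureTheory.volume a b := by
    intro a b
    refine (intervalIntegrable_const (c := π / 2)).mono_fun ?_ ?_
    · have : Measurable (fun θ => Real.arctan (c / Real.cos θ)) :=
        Real.measurable_arctan.comp (measurable_const.div Real.measurable_cos)
      exact this.aestronglyMeasurable
    · refine Filter.Eventually.of_forall fun θ => ?_
      simp only [Real.norm_eq_abs]
      rw [abs_of_pos (by positivity : (0:ℝ) < π / 2), abs_le]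
      exact ⟨(Real.neg_pi_div_two_lt_arctan _).le, (Real.arctan_lt_pi_div_two _).le⟩
  have hcos : ∀ x ∈ Set.uIcc 0 θ0, 0 < Real.cos x := by
    intro x hx
    rw [Set.uIcc_of_le hθ0] at hx
    exact Real.cos_pos_of_mem_Ioo ⟨by linarith [hx.1], by linarith [hx.2]⟩
  have hsin : ∀ x ∈ Set.uIcc 0 θ0, 0 ≤ Real.sin x := by
    intro x hx
    rw [Set.uIcc_of_le hθ0] at hx
    exact Real.sin_nonneg_of_nonneg_of_le_pi hx.1 (by linarith [hx.2])
  have hderiv : ∀ x ∈ Set.uIcc 0 θ0, HasDerivAt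
      (fun x => c * (Real.log (1 + Real.sin x) - Real.log (Real.cos x))) (c / Real.cos x) x := by
    intro x hx
    have h1 := hcos x hx
    have h2 := hsin x hx
    have h3 : (1 + Real.sin x) ≠ 0 := by positivity
    have := ((((Real.hasDerivAt_sin x).const_add 1).log h3).sub
      ((Real.hasDerivAt_cos x).log h1.ne')).const_mul c
    have h5 : c / Real.cos x =
        c * (Real.cos x / (1 + Real.sin x) - -Real.sin x / Real.cos x) := by
      field_simp
      linear_combination (-c) * Real.sin_sq_add_cos_sq x
    rw [h5]
    exact this
  have hI : IntervalIntegrable (fun θ => c / Real.cos θ) MeasureTheory.volume 0 θ0 := by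
    apply ContinuousOn.intervalIntegrable
    exact continuousOn_const.div Real.continuous_cos.continuousOn (fun x hx => (hcos x hx).ne')
  have hA : ∫ θ in (0:ℝ)..θ0, Real.arctan (c / Real.cos θ) ≤ c * Real.log (2 / Real.cos θ0) := by
    have h1 : ∫ θ in (0:ℝ)..θ0, Real.arctan (c / Real.cos θ) ≤ ∫ θ in (0:ℝ)..θ0, c / Real.cos θ := by
      refine intervalIntegral.integral_mono_on hθ0 (hint _ _) hI fun x hx => ?_
      have := hcos x (by rwa [Set.uIcc_of_le hθ0])
      have h0 : 0 ≤ Real.arctan (c / Real.cos x) := Real.arctan_nonneg.2 (by positivity)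
      have := Real.le_tan h0 (Real.arctan_lt_pi_div_two _)
      rwa [Real.tan_arctan] at this
    refine h1.trans ?_
    rw [intervalIntegral.integral_eq_sub_of_hasDerivAt hderiv hI]
    have h2 := hcos θ0 Set.right_mem_uIcc
    have h3 := hsin θ0 Set.right_mem_uIcc
    rw [Real.log_div two_ne_zero h2.ne']
    have h4 : Real.log (1 + Real.sin θ0) ≤ Real.log 2 :=
      Real.log_le_log (by positivity) (by linarith [Real.sin_le_one θ0])
    simp only [Real.sin_zero, Real.cos_zero, add_zero, Real.log_one, sub_zero, mul_zero]
    gcongr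
  have hB : ∫ θ in θ0..(π / 2), Real.arctan (c / Real.cos θ) ≤ (π ^ 2 / 4) * Real.cos θ0 := by
    have h1 : ∫ θ in θ0..(π / 2), Real.arctan (c / Real.cos θ) ≤ ∫ θ in θ0..(π / 2), π / 2 :=
      intervalIntegral.integral_mono_on hθ0'.le (hint _ _) intervalIntegrable_const
        fun x hx => (Real.arctan_lt_pi_div_two _).le
    refine h1.trans ?_
    rw [intervalIntegral.integral_const, smul_eq_mul]
    have h2 := Real.mul_le_sin (x := π / 2 - θ0) (by linarith) (by linarith)
    rw [Real.sin_pi_div_two_sub] at h2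
    have h3 := mul_le_mul_of_nonneg_left h2 (by positivity : 0 ≤ π ^ 2 / 4)
    refine le_trans (le_of_eq ?_) h3
    field_simp
    ring
  rw [← intervalIntegral.integral_add_adjacent_intervals (hint 0 θ0) (hint θ0 (π / 2))]
  linarith
end
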